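/- Let w₁,…,w_{2r} ∈ g be linearly independent with span S, and let u₁,…,u_ℓ be a basis of the Killing-orthogonal complement S^⊥. Then there is a nonzero constant κ₁ such that Σ_{ν∈Π_r} B([w_{ν(1)},w_{ν(2)}],x)⋯B([w_{ν(2r-1)},w_{ν(2r)}],x) = κ₁·det(∂_{u_i} p_j)(x) for all x ∈ g, where p₁,…,p_ℓ are homogeneous generators of S(g)^G. -/

import Mathlib

open Module MvPolynomial

/-- The value at `x` of `Γ(w₁ ∧ ⋯ ∧ w_{2r})`, the sum over perfect matchings `ν` of
`{1, …, 2r}` of `∏ᵢ B([w_{ν(2i-1)}, w_{ν(2i)}], x)` (`B` the Killing form), written as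
the average over all of `Σ_{2r}` with signs (each matching class consists of `r! 2^r`
permutations, on which the signed summand is constant). -/
noncomputable def GammaVal {L : Type*} [LieRing L] [LieAlgebra ℂ L]
    [Module.Finite ℂ L] (r : ℕ) (w : Fin (2 * r) → L) (x : L) : ℂ :=
  (1 / ((Nat.factorial r : ℂ) * 2 ^ r)) *
    ∑ σ : Equiv.Perm (Fin (2 * r)), ((Equiv.Perm.sign σ : ℤ) : ℂ) *
      ∏ i : Fin r,
        killingForm ℂ L
          ⁅w (σ ⟨2 * i.1, by have := i.isLt; omega⟩),
            w (σ ⟨2 * i.1 + 1, by have := i.isLt; omega⟩)⁆ x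

/-- Directional derivative `∂_u P` of a polynomial `P` on `L` in the coordinates of a
basis `b`. -/
noncomputable def dirDeriv {L : Type*} [LieRing L] [LieAlgebra ℂ L] {n : ℕ}
    (b : Basis (Fin n) ℂ L) (u : L) (P : MvPolynomial (Fin n) ℂ) :
    MvPolynomial (Fin n) ℂ :=
  ∑ i, MvPolynomial.C (b.repr u i) * MvPolynomial.pderiv i P

/-- Infinitesimal invariance of a polynomial function on `L` under the adjoint action. -/
noncomputable def IsInvariantPoly {L : Type*} [LieRing L] [LieAlgebra ℂ L] {n : ℕ}
    (b : Basis (Fin n) ℂ L) (P : MvPolynomial (Fin n) ℂ) : Prop :=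
  ∀ x y : L, MvPolynomial.eval (fun i => b.repr x i) (dirDeriv b ⁅y, x⁆ P) = 0

namespace KostantPfaffian

open scoped TensorProduct in
/-- In characteristic zero, a derivation from a subalgebra of a finitely generated field extension
to the field extends to the whole field. -/
theorem exists_derivation_extending {K : Type*} [Field K] [Algebra ℂ K]
    [Algebra.EssFiniteType ℂ K] (R : Subalgebra ℂ K) (δ : Derivation ℂ R K) :
    ∃ Δ : Derivation ℂ K K, ∀ x : R, Δ x = δ x := by
  let F := FractionRing R
  let : Algebra F K := FractionRing.liftAlgebra R K
  have : IsScalarTower R F K := FractionRing.isScalarTower_liftAlgebra R K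
  have : IsScalarTower ℂ F K := IsScalarTower.of_algebraMap_eq' (by
    rw [IsScalarTower.algebraMap_eq ℂ R F, ← RingHom.comp_assoc,
      ← IsScalarTower.algebraMap_eq R F K, ← IsScalarTower.algebraMap_eq ℂ R K])
  have : Algebra.EssFiniteType F K := Algebra.EssFiniteType.of_comp ℂ F K
  have : CharZero F := charZero_of_injective_algebraMap (algebraMap ℂ F).injective
  have : Algebra.FormallySmooth R F := Algebra.FormallySmooth.of_isLocalization (nonZeroDivisors R)
  have : Algebra.FormallySmooth R K := Algebra.FormallySmooth.comp R F K
  have hinj : Function.Injective (KaehlerDifferential.mapBaseChange ℂ R K) := by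
    rw [injective_iff_map_eq_zero]
    intro x hx
    obtain ⟨x, rfl⟩ := (Algebra.H1Cotangent.exact_δ_mapBaseChange ℂ R K x).mp hx
    rw [Subsingleton.elim x 0, map_zero]
  obtain ⟨s, hs⟩ := LinearMap.exists_leftInverse_of_injective
    (KaehlerDifferential.mapBaseChange ℂ R K) (LinearMap.ker_eq_bot.mpr hinj)
  let l : K ⊗[R] Ω[R⁄ℂ] →ₗ[K] K := TensorProduct.AlgebraTensorModule.lift
    ((LinearMap.lsmul K (Ω[R⁄ℂ] →ₗ[R] K)).flip δ.liftKaehlerDifferential)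
  refine ⟨(l.comp s).compDer (KaehlerDifferential.D ℂ K), fun x => ?_⟩
  have h1 : KaehlerDifferential.D ℂ K (x : K)
      = KaehlerDifferential.mapBaseChange ℂ R K (1 ⊗ₜ KaehlerDifferential.D ℂ R x) := by
    rw [KaehlerDifferential.mapBaseChange_tmul, one_smul, KaehlerDifferential.map_D]
    rfl
  have h2 := LinearMap.congr_fun hs (1 ⊗ₜ[R] KaehlerDifferential.D ℂ R x)
  change l (s (KaehlerDifferential.D ℂ K (x : K))) = _
  rw [h1]
  rw [LinearMap.comp_apply] at h2
  rw [h2]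
  simp [l]

/-- A tuple of prescribed values on the images of the variables, compatible with all relations,
is attained by a derivation of the field. -/
theorem exists_derivation_of_relations {K σ : Type*} [Field K] [Algebra ℂ K]
    [Algebra.EssFiniteType ℂ K] [Fintype σ] (φ : MvPolynomial σ ℂ →ₐ[ℂ] K) (η : σ → K)
    (h : ∀ G, φ G = 0 → ∑ j, η j * φ (pderiv j G) = 0) :
    ∃ Δ : Derivation ℂ K K, ∀ j, Δ (φ (X j)) = η j := by
  classical
  let d : MvPolynomial σ ℂ →ₗ[ℂ] K :=
    ∑ j, (LinearMap.mulLeft ℂ (η j)).comp (φ.toLinearMap.comp (pderiv j).toLinearMap)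
  have hd : ∀ G, d G = ∑ j, η j * φ (pderiv j G) := fun G => by simp [d]
  have hdm : ∀ G G', d (G * G') = φ G * d G' + φ G' * d G := fun G G' => by
    simp only [hd, Finset.mul_sum, ← Finset.sum_add_distrib, Derivation.leibniz, smul_eq_mul,
      map_add, map_mul]
    exact Finset.sum_congr rfl fun j _ => by ring
  obtain ⟨s, hs⟩ := φ.rangeRestrict.toLinearMap.exists_rightInverse_of_surjective
    (LinearMap.range_eq_top.mpr φ.rangeRestrict_surjective)
  have hs' : ∀ x : φ.range, φ (s x) = x := fun x =>
    congrArg Subtype.val (LinearMap.congr_fun hs x)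
  have hds : ∀ G (x : φ.range), φ G = x → d (s x) = d G := fun G x hx => by
    rw [← sub_eq_zero, ← map_sub, hd, h]
    rw [map_sub, hs', hx, sub_self]
  let δ : Derivation ℂ φ.range K := Derivation.mk' (d.comp s) fun x y => by
    have := hds (s x * s y) (x * y) (by simp [hs'])
    simp only [LinearMap.comp_apply, this, hdm, hs']
    rfl
  obtain ⟨Δ, hΔ⟩ := exists_derivation_extending φ.range δ
  refine ⟨Δ, fun j => ?_⟩
  have h1 : d (s (φ.rangeRestrict (X j))) = d (X j) := hds _ _ rfl
  calc Δ (φ (X j)) = δ (φ.rangeRestrict (X j)) := hΔ (φ.rangeRestrict (X j))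
    _ = d (X j) := h1
    _ = η j := by
      rw [hd, Finset.sum_eq_single j]
      · simp
      · intro i _ hi
        simp [pderiv_X_of_ne hi.symm]
      · simp

/-- Partial derivatives lower the total degree. -/
theorem totalDegree_pderiv_le {σ : Type*} (i : σ) (P : MvPolynomial σ ℂ) :
    (pderiv i P).totalDegree ≤ P.totalDegree - 1 := by
  refine Finset.sup_le fun m hm => ?_
  have hm' : coeff (m + Finsupp.single i 1) P ≠ 0 := fun h0 => by
    rw [MvPolynomial.mem_support_iff, coeff_pderiv, h0, zero_mul] at hm
    exact hm rfl
  have := le_totalDegree (MvPolynomial.mem_support_iff.mpr hm')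
  rw [Finsupp.sum_add_index' (fun _ => rfl) (fun _ _ _ => rfl), Finsupp.sum_single_index rfl] at this
  exact Nat.le_sub_one_of_lt this

/-- A nonconstant polynomial does not divide all its partial derivatives. -/
theorem exists_not_dvd_pderiv {σ : Type*} {P : MvPolynomial σ ℂ} (hP : P.totalDegree ≠ 0) :
    ∃ i, ¬ P ∣ pderiv i P := by
  classical
  by_contra! h
  have hzero : ∀ i, pderiv i P = 0 := fun i => by
    by_contra h0
    obtain ⟨Q, hQ⟩ := h i
    have hP0 : P ≠ 0 := fun hP0 => hP (by rw [hP0, totalDegree_zero])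
    have hQ0 : Q ≠ 0 := fun hQ0 => h0 (by rw [hQ, hQ0, mul_zero])
    have h1 := totalDegree_pderiv_le i P
    rw [hQ, totalDegree_mul_of_isDomain hP0 hQ0] at h1
    omega
  refine hP (Nat.le_zero.mp (Finset.sup_le fun m hm => ?_))
  have hm0 : m = 0 := by
    by_contra hm0
    obtain ⟨i, hi⟩ := Finsupp.ne_iff.mp hm0
    have hle : Finsupp.single i 1 ≤ m := by
      simpa [Finsupp.single_le_iff] using Nat.one_le_iff_ne_zero.mpr hi
    have h1 := coeff_pderiv (i := i) P (m - Finsupp.single i 1)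
    rw [hzero, coeff_zero, tsub_add_cancel_of_le hle] at h1
    rcases mul_eq_zero.mp h1.symm with h2 | h2
    · exact MvPolynomial.mem_support_iff.mp hm h2
    · exact Nat.cast_add_one_ne_zero _ h2
  simp [hm0]

/-- The chain rule for a derivation applied to a polynomial expression. -/
theorem derivation_aeval {B σ : Type*} [CommRing B] [Algebra ℂ B] [Fintype σ]
    (D : Derivation ℂ B B) (q : σ → B) (G : MvPolynomial σ ℂ) :
    D (aeval q G) = ∑ j, aeval q (pderiv j G) * D (q j) := by
  classical
  induction G using MvPolynomial.induction_on with
  | C a => simp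
  | add P Q hP hQ => simp only [map_add, hP, hQ, add_mul, Finset.sum_add_distrib]
  | mul_X P i hP =>
    simp only [map_mul, aeval_X, Derivation.leibniz, smul_eq_mul, hP, map_add, add_mul,
      Finset.sum_add_distrib, Finset.mul_sum, pderiv_X]
    congr 1
    · rw [Finset.sum_eq_single i]
      · simp
      · intro j _ hj
        simp [hj.symm]
      · simp
    · exact Finset.sum_congr rfl fun j _ => by ring

/-- A prime dividing a nonzero constant of a derivation divides its own derivative. -/
theorem dvd_derivation_of_dvd_constant {σ : Type*} (D : Derivation ℂ (MvPolynomial σ ℂ)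
    (MvPolynomial σ ℂ)) {f h : MvPolynomial σ ℂ} (hf : Prime f) (hh : h ≠ 0) (hfh : f ∣ h)
    (hD : D h = 0) : f ∣ D f := by
  have hfin : FiniteMultiplicity f h := FiniteMultiplicity.of_prime_left hf hh
  obtain ⟨e, he, hfe⟩ := hfin.exists_eq_pow_mul_and_not_dvd
  obtain ⟨k, hk⟩ : ∃ k, multiplicity f h = k + 1 := Nat.exists_eq_add_one.mpr
    (Nat.pos_of_ne_zero (fun h0 => multiplicity_eq_zero.mp h0 hfh))
  rw [hk] at he
  rw [he, Derivation.leibniz, Derivation.leibniz_pow] at hD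
  simp only [smul_eq_mul, nsmul_eq_mul, Nat.add_sub_cancel] at hD
  have h1 : f ^ k * (f * D e + C ((k : ℂ) + 1) * (e * D f)) = 0 := by
    rw [← hD, map_add, map_natCast, map_one]
    push_cast
    ring
  have h2 := (mul_eq_zero.mp h1).resolve_left (pow_ne_zero _ hf.ne_zero)
  have h3 : f ∣ C ((k : ℂ) + 1) * (e * D f) :=
    (Dvd.intro (-D e) (by linear_combination -h2))
  have hu : IsUnit (C ((k : ℂ) + 1) : MvPolynomial σ ℂ) :=
    (isUnit_iff_ne_zero.mpr (Nat.cast_add_one_ne_zero k)).map C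
  rw [hu.dvd_mul_left] at h3
  exact (hf.dvd_or_dvd h3).resolve_left hfe

/-- If the constants of a family of derivations form a polynomial ring `ℂ[p]`, and every prime
stable under the family is itself a constant, then the differentials of the generators `p` stay
linearly independent modulo every prime. -/
theorem differentials_independent_mod_prime {σ τ ι : Type*} [Fintype σ] [Fintype τ]
    (D : ι → Derivation ℂ (MvPolynomial σ ℂ) (MvPolynomial σ ℂ))
    (p : τ → MvPolynomial σ ℂ) (hindep : AlgebraicIndependent ℂ p) (hinv : ∀ i j, D i (p j) = 0)
    (hgen : ∀ P, (∀ i, D i P = 0) → P ∈ Algebra.adjoin ℂ (Set.range p))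
    (hsemi : ∀ f, Prime f → (∀ i, f ∣ D i f) → ∀ i, D i f = 0)
    {K : Type*} [Field K] [Algebra ℂ K] [Algebra.EssFiniteType ℂ K]
    (φ : MvPolynomial σ ℂ →ₐ[ℂ] K) {f : MvPolynomial σ ℂ} (hf : Prime f)
    (hφ : ∀ P, φ P = 0 ↔ f ∣ P) (g : τ → K)
    (hg : ∀ k, ∑ j, g j * φ (pderiv k (p j)) = 0) : g = 0 := by
  classical
  have hDp : ∀ i G, D i (aeval p G) = 0 := fun i G => by
    rw [derivation_aeval]
    simp [hinv]
  have hgen' : ∀ P, (∀ i, D i P = 0) → ∃ G, aeval p G = P := fun P hP => by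
    have := hgen P hP
    rwa [Algebra.adjoin_range_eq_range_aeval] at this
  have key : ∀ η : τ → K,
      (∀ G : MvPolynomial τ ℂ, φ (aeval p G) = 0 → ∑ j, η j * φ (aeval p (pderiv j G)) = 0) →
      ∑ j, g j * η j = 0 := fun η hη => by
    obtain ⟨Δ, hΔ⟩ := exists_derivation_of_relations (φ.comp (aeval p)) η hη
    have h1 : ∀ j, η j = ∑ k, φ (pderiv k (p j)) * Δ (φ (X k)) := fun j => by
      have h2 : ∀ P, φ P = aeval (fun k => φ (X k)) P := fun P =>
        DFunLike.congr_fun (aeval_unique φ) P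
      rw [← hΔ j, AlgHom.comp_apply, aeval_X, h2 (p j), derivation_aeval]
      exact Finset.sum_congr rfl fun k _ => by rw [h2 (pderiv k (p j))]
    simp only [h1, Finset.mul_sum]
    rw [Finset.sum_comm]
    refine Finset.sum_eq_zero fun k _ => ?_
    rw [← zero_mul (Δ (φ (X k))), ← hg k, Finset.sum_mul]
    exact Finset.sum_congr rfl fun j _ => by ring
  by_cases hker : ∀ G : MvPolynomial τ ℂ, φ (aeval p G) = 0 → G = 0
  · funext j
    have := key (Pi.single j 1) fun G hG => by simp [hker G hG]
    simpa [Pi.single_apply] using this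
  push Not at hker
  obtain ⟨G₀, hG₀, hG₀'⟩ := hker
  have hinj : ∀ G, aeval p G = 0 → G = 0 := fun G hG => hindep.eq_zero_of_aeval_eq_zero G hG
  have hDf : ∀ i, D i f = 0 := hsemi f hf fun i =>
    dvd_derivation_of_dvd_constant (D i) hf (fun h0 => hG₀' (hinj _ h0)) ((hφ _).mp hG₀)
      (hDp i G₀)
  obtain ⟨F, hF⟩ := hgen' f hDf
  have hFdvd : ∀ G, φ (aeval p G) = 0 → F ∣ G := fun G hG => by
    obtain ⟨h, hh⟩ := (hφ _).mp hG
    obtain ⟨H, hH⟩ := hgen' h fun i => by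
      have h1 := hDp i G
      rw [hh, Derivation.leibniz, hDf, smul_zero, add_zero, smul_eq_mul] at h1
      exact (mul_eq_zero.mp h1).resolve_left hf.ne_zero
    refine ⟨H, sub_eq_zero.mp (hinj _ ?_)⟩
    rw [map_sub, map_mul, hF, hH, hh, sub_self]
  have hφF : φ (aeval p F) = 0 := by rw [hF, hφ]
  have hnc : ∀ c : ℂ, f ≠ C c := fun c hc => by
    rcases eq_or_ne c 0 with rfl | h0
    · exact hf.ne_zero (by rw [hc, map_zero])
    · exact hf.not_isUnit (hc ▸ (isUnit_iff_ne_zero.mpr h0).map C)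
  obtain ⟨j₀, hj₀⟩ := exists_not_dvd_pderiv (P := F) fun h0 => by
    rw [totalDegree_eq_zero_iff_eq_C] at h0
    refine hnc (coeff 0 F) ?_
    rw [← hF, h0]
    simp [algebraMap_eq]
  obtain ⟨k₀, hk₀⟩ := exists_not_dvd_pderiv (P := f) fun h0 =>
    hnc _ (totalDegree_eq_zero_iff_eq_C.mp h0)
  set c : τ → K := fun j => φ (aeval p (pderiv j F)) with hc
  have hcj : c j₀ ≠ 0 := fun h0 => hj₀ (hFdvd _ h0)
  have hprop : ∀ j, g j * c j₀ = g j₀ * c j := fun j => by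
    have := key (Pi.single j (c j₀) - Pi.single j₀ (c j)) fun G hG => by
      obtain ⟨H, rfl⟩ := hFdvd G hG
      have h1 : ∀ i, φ (aeval p (pderiv i (F * H))) = φ (aeval p H) * c i := fun i => by
        rw [Derivation.leibniz, smul_eq_mul, smul_eq_mul, map_add, map_add, map_mul, map_mul,
          map_mul, map_mul, hφF, zero_mul, zero_add]
      simp only [h1, Pi.sub_apply, sub_mul, Finset.sum_sub_distrib]
      simp [Pi.single_apply]
      ring
    simp only [Pi.sub_apply, mul_sub, Finset.sum_sub_distrib] at this
    simp [Pi.single_apply] at this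
    linear_combination this
  have hgj₀ : g j₀ = 0 := by
    have h1 : φ (pderiv k₀ f) = ∑ j, c j * φ (pderiv k₀ (p j)) := by
      rw [← hF, derivation_aeval, map_sum]
      simp only [map_mul, hc]
    have h2 : g j₀ * φ (pderiv k₀ f) = 0 := by
      rw [h1, ← zero_mul (c j₀), ← hg k₀, Finset.sum_mul, Finset.mul_sum]
      refine Finset.sum_congr rfl fun j _ => ?_
      linear_combination -φ (pderiv k₀ (p j)) * hprop j
    exact (mul_eq_zero.mp h2).resolve_right fun h0 => hk₀ ((hφ _).mp h0)
  funext j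
  have := hprop j
  rw [hgj₀, zero_mul] at this
  exact (mul_eq_zero.mp this).resolve_right hcj

section AdjointDerivation

variable {L : Type*} [LieRing L] [LieAlgebra ℂ L] {n : ℕ} (b : Basis (Fin n) ℂ L)

/-- A linear form on `L` as a polynomial in the coordinates of a basis. -/
noncomputable def linForm (φ : Dual ℂ L) : MvPolynomial (Fin n) ℂ :=
  ∑ i, C (φ (b i)) * X i

theorem eval_linForm (φ : Dual ℂ L) (x : L) :
    eval (fun i => b.repr x i) (linForm b φ) = φ x := by
  conv_rhs => rw [← b.sum_repr x, map_sum]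
  simp [linForm, mul_comm]

/-- Polynomials agreeing at all points of `L` are equal. -/
theorem ext_eval {P Q : MvPolynomial (Fin n) ℂ}
    (h : ∀ x : L, eval (fun i => b.repr x i) P = eval (fun i => b.repr x i) Q) : P = Q :=
  MvPolynomial.funext fun v => by
    have : (fun i => b.repr (b.equivFun.symm v) i) = v := b.equivFun.apply_symm_apply v
    have h1 := h (b.equivFun.symm v)
    rwa [this] at h1

theorem linForm_isHomogeneous (φ : Dual ℂ L) : (linForm b φ).IsHomogeneous 1 :=
  IsHomogeneous.sum _ _ _ fun i _ => by
    simpa using (isHomogeneous_C (Fin n) (φ (b i))).mul (isHomogeneous_X ℂ i)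

theorem pderiv_linForm (φ : Dual ℂ L) (k : Fin n) : pderiv k (linForm b φ) = C (φ (b k)) := by
  classical
  simp [linForm, pderiv_X, Pi.single_apply]

theorem linForm_coord (k : Fin n) : linForm b (b.coord k) = X k :=
  ext_eval b fun x => by rw [eval_linForm, eval_X, Basis.coord_apply]

/-- The derivation of the polynomial functions on `L` induced by the vector field `x ↦ ⁅y, x⁆`. -/
noncomputable def adDeriv (y : L) :
    Derivation ℂ (MvPolynomial (Fin n) ℂ) (MvPolynomial (Fin n) ℂ) :=
  ∑ k, linForm b (b.coord k ∘ₗ (LieAlgebra.ad ℂ L y : L →ₗ[ℂ] L)) • pderiv k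

theorem adDeriv_apply (y : L) (P : MvPolynomial (Fin n) ℂ) :
    adDeriv b y P =
      ∑ k, linForm b (b.coord k ∘ₗ (LieAlgebra.ad ℂ L y : L →ₗ[ℂ] L)) * pderiv k P := by
  simp only [adDeriv, ← Derivation.coeFnAddMonoidHom_apply, map_sum, Finset.sum_apply]
  rfl

theorem eval_adDeriv (x y : L) (P : MvPolynomial (Fin n) ℂ) :
    eval (fun i => b.repr x i) (adDeriv b y P) =
      eval (fun i => b.repr x i) (dirDeriv b ⁅y, x⁆ P) := by
  simp only [adDeriv_apply, dirDeriv, map_sum, map_mul, eval_linForm, eval_C]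
  rfl

theorem isInvariantPoly_iff (P : MvPolynomial (Fin n) ℂ) :
    IsInvariantPoly b P ↔ ∀ y, adDeriv b y P = 0 := by
  constructor
  · exact fun h y => ext_eval b fun x => by rw [eval_adDeriv, h, map_zero]
  · exact fun h x y => by rw [← eval_adDeriv, h, map_zero]

theorem adDeriv_linForm (y : L) (φ : Dual ℂ L) :
    adDeriv b y (linForm b φ) = linForm b (φ ∘ₗ (LieAlgebra.ad ℂ L y : L →ₗ[ℂ] L)) := by
  classical
  refine ext_eval b fun x => ?_
  rw [eval_adDeriv, eval_linForm]
  conv_rhs => rw [LinearMap.comp_apply, LieAlgebra.ad_apply, ← b.sum_repr ⁅y, x⁆, map_sum]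
  simp [dirDeriv, pderiv_linForm]

theorem adDeriv_lie (y z : L) (P : MvPolynomial (Fin n) ℂ) :
    adDeriv b ⁅y, z⁆ P = adDeriv b z (adDeriv b y P) - adDeriv b y (adDeriv b z P) := by
  suffices h : adDeriv b ⁅y, z⁆ = ⁅adDeriv b z, adDeriv b y⁆ by
    rw [h, Derivation.commutator_apply]
  refine derivation_ext fun k => ?_
  rw [Derivation.commutator_apply, ← linForm_coord b k, adDeriv_linForm, adDeriv_linForm,
    adDeriv_linForm, adDeriv_linForm, adDeriv_linForm]
  refine ext_eval b fun x => ?_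
  rw [map_sub]
  simp only [eval_linForm, LinearMap.comp_apply, LieAlgebra.ad_apply]
  rw [lie_lie, map_sub]

theorem adDeriv_add_smul (c : ℂ) (y z : L) (P : MvPolynomial (Fin n) ℂ) :
    adDeriv b (c • y + z) P = C c * adDeriv b y P + adDeriv b z P := by
  refine ext_eval b fun x => ?_
  simp [eval_adDeriv, dirDeriv, add_mul, Finset.sum_add_distrib, Finset.mul_sum, mul_assoc]

theorem totalDegree_adDeriv_le (y : L) {P : MvPolynomial (Fin n) ℂ} (hP : P.totalDegree ≠ 0) :
    (adDeriv b y P).totalDegree ≤ P.totalDegree := by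
  rw [adDeriv_apply]
  refine totalDegree_finsetSum_le fun k _ => (totalDegree_mul _ _).trans ?_
  have h1 := (linForm_isHomogeneous b
    (b.coord k ∘ₗ (LieAlgebra.ad ℂ L y : L →ₗ[ℂ] L))).totalDegree_le
  have h2 := totalDegree_pderiv_le k P
  omega

/-- Every linear form is represented through the Killing form. -/
theorem exists_killingForm_eq [FiniteDimensional ℂ L] [LieAlgebra.IsKilling ℂ L] (φ : Dual ℂ L) :
    ∃ x, ∀ y, killingForm ℂ L x y = φ y :=
  ⟨(LinearMap.BilinForm.toDual _ (LieAlgebra.IsKilling.killingForm_nondegenerate ℂ L)).symm φ,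
    fun _ => LinearMap.BilinForm.apply_toDual_symm_apply _ _⟩

theorem eq_zero_of_killingForm_eq_zero [FiniteDimensional ℂ L] [LieAlgebra.IsKilling ℂ L] {x : L}
    (h : ∀ y, killingForm ℂ L x y = 0) : x = 0 :=
  (LieAlgebra.IsKilling.killingForm_nondegenerate ℂ L).1 x h

/-- A Lie algebra with nondegenerate Killing form is perfect. -/
theorem eq_top_of_forall_lie_mem [FiniteDimensional ℂ L] [LieAlgebra.IsKilling ℂ L]
    (S : Submodule ℂ L) (h : ∀ y z : L, ⁅y, z⁆ ∈ S) : S = ⊤ := by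
  by_contra hS
  obtain ⟨φ, hφ, hφS⟩ := Submodule.exists_le_ker_of_lt_top S (lt_top_iff_ne_top.mpr hS)
  obtain ⟨x, hx⟩ := exists_killingForm_eq φ
  have hcomm : ∀ y : L, ⁅x, y⁆ = 0 := fun y => eq_zero_of_killingForm_eq_zero fun z => by
    rw [LieModule.traceForm_apply_lie_apply, hx]
    exact hφS (h y z)
  have hx0 : x = 0 := by
    have hmem : x ∈ LieAlgebra.center ℂ L := fun y => by rw [← lie_skew, hcomm, neg_zero]
    rwa [LieAlgebra.center_eq_bot, LieSubmodule.mem_bot] at hmem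
  exact hφ (LinearMap.ext fun y => by rw [← hx, hx0, map_zero])

/-- A prime polynomial stable under the adjoint action is invariant. -/
theorem adDeriv_eq_zero_of_dvd [FiniteDimensional ℂ L] [LieAlgebra.IsKilling ℂ L]
    {f : MvPolynomial (Fin n) ℂ} (hf : Prime f) (h : ∀ y, f ∣ adDeriv b y f) (y : L) :
    adDeriv b y f = 0 := by
  have hscalar : ∀ y, ∃ c, adDeriv b y f = C c * f := fun y => by
    by_cases hd : f.totalDegree = 0
    · refine ⟨0, ?_⟩
      rw [totalDegree_eq_zero_iff_eq_C.mp hd, derivation_C, map_zero, zero_mul]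
    obtain ⟨q, hq⟩ := h y
    rcases eq_or_ne q 0 with rfl | hq0
    · exact ⟨0, by simp [hq]⟩
    have h1 := totalDegree_adDeriv_le b y hd
    rw [hq, totalDegree_mul_of_isDomain hf.ne_zero hq0] at h1
    refine ⟨coeff 0 q, ?_⟩
    rw [hq, totalDegree_eq_zero_iff_eq_C.mp (show q.totalDegree = 0 by omega), mul_comm]
    simp
  let S : Submodule ℂ L :=
    { carrier := {y | adDeriv b y f = 0}
      add_mem' := fun {y z} hy hz => by
        have := adDeriv_add_smul b 1 y z f
        simp_all
      zero_mem' := by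
        have := adDeriv_add_smul b (-1) 0 0 f
        simp_all
      smul_mem' := fun c y hy => by
        have h0 : adDeriv b (0 : L) f = 0 := by
          have := adDeriv_add_smul b (-1) 0 0 f
          simp_all
        have := adDeriv_add_smul b c y 0 f
        simp_all }
  have hS : S = ⊤ := eq_top_of_forall_lie_mem S fun y z => by
    change adDeriv b ⁅y, z⁆ f = 0
    obtain ⟨c, hc⟩ := hscalar y
    obtain ⟨d, hd⟩ := hscalar z
    rw [adDeriv_lie, hc, hd, ← smul_eq_C_mul, ← smul_eq_C_mul, Derivation.map_smul, Derivation.map_smul,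
      hc, hd, smul_eq_C_mul, smul_eq_C_mul]
    ring
  exact (hS ▸ Submodule.mem_top : y ∈ S)

end AdjointDerivation

section Determinant

variable {ι κ : Type*} [Fintype ι] [Fintype κ] [DecidableEq ι] [DecidableEq κ]

/-- The determinant as an alternating function of some of the rows, the others being fixed. -/
def detAlternating {R : Type*} [CommRing R] (d : κ → ι ⊕ κ → R) : (ι ⊕ κ → R) [⋀^ι]→ₗ[R] R where
  toFun a := Matrix.detRowAlternating (R := R) (Sum.elim a d)
  map_update_add' {inst} a i x y := by
    rw [Sum.elim_update_left, Sum.elim_update_left, Sum.elim_update_left,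
      AlternatingMap.map_update_add]
  map_update_smul' {inst} a i c x := by
    rw [Sum.elim_update_left, Sum.elim_update_left, AlternatingMap.map_update_smul]
  map_eq_zero_of_eq' a i j h hij :=
    AlternatingMap.map_eq_zero_of_eq _ _ (i := Sum.inl i) (j := Sum.inl j) h (by simpa using hij)

theorem detAlternating_apply {R : Type*} [CommRing R] (d : κ → ι ⊕ κ → R) (a : ι → ι ⊕ κ → R) :
    detAlternating d a = (Matrix.of (Sum.elim a d)).det := rfl

theorem exists_detAlternating_basis_ne_zero {K : Type*} [Field K] {d : κ → ι ⊕ κ → K}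
    (hd : LinearIndependent K d) {τ : Type*} [Finite τ] (c : Basis τ K (ι ⊕ κ → K)) :
    ∃ v : ι → τ, detAlternating d (fun i => c (v i)) ≠ 0 := by
  by_contra! h
  have hzero : detAlternating (ι := ι) d = 0 := Basis.ext_alternating c fun v _ => by simp [h]
  let S := Submodule.span K (Set.range d)
  have hS : finrank K ((ι ⊕ κ → K) ⧸ S) = Fintype.card ι := by
    have h1 := S.finrank_quotient_add_finrank
    rw [finrank_span_eq_card hd] at h1
    simp at h1
    exact h1
  obtain ⟨q⟩ : Nonempty (Basis ι K ((ι ⊕ κ → K) ⧸ S)) :=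
    ⟨(finBasis K _).reindex (Fintype.equivOfCardEq (by simp [hS]))⟩
  choose a ha using fun i => S.mkQ_surjective (q i)
  have hli := LinearIndependent.sumElim_of_quotient (linearIndependent_span hd) a
    (by
      have h1 : Submodule.Quotient.mk ∘ a = q := funext ha
      rw [h1]
      exact q.linearIndependent)
  have hli' : LinearIndependent K (Matrix.of (Sum.elim a d)).row := by
    have h3 := hli.comp _ (Equiv.sumComm ι κ).injective
    have h4 : Sum.elim (fun i => ((⟨d i, Submodule.subset_span ⟨i, rfl⟩⟩ : S) : ι ⊕ κ → K)) a ∘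
        Equiv.sumComm ι κ = (Matrix.of (Sum.elim a d)).row := by
      ext i : 1
      rcases i with i | i <;> rfl
    exact h4 ▸ h3
  have h2 := (Matrix.isUnit_iff_isUnit_det _).mp
    (Matrix.linearIndependent_rows_iff_isUnit.mp hli')
  rw [← detAlternating_apply, hzero] at h2
  simp at h2

/-- Alternating maps annihilated by the same vectors complementary to `ι` others are proportional. -/
theorem alternating_mul_eq {K M : Type*} [Field K] [AddCommGroup M] [Module K M]
    (f g : M [⋀^ι]→ₗ[K] K) (B : Basis (ι ⊕ κ) K M)
    (hf : ∀ a i j, a i = B (Sum.inr j) → f a = 0) (hg : ∀ a i j, a i = B (Sum.inr j) → g a = 0)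
    (a : ι → M) :
    f (fun i => B (Sum.inl i)) * g a = g (fun i => B (Sum.inl i)) * f a := by
  suffices h : f (fun i => B (Sum.inl i)) • g = g (fun i => B (Sum.inl i)) • f by
    simpa using congrArg (fun F : M [⋀^ι]→ₗ[K] K => F a) h
  refine Basis.ext_alternating B fun v hv => ?_
  by_cases hr : ∃ i j, v i = Sum.inr j
  · obtain ⟨i, j, hij⟩ := hr
    simp [hf (fun i => B (v i)) i j (by rw [hij]), hg (fun i => B (v i)) i j (by rw [hij])]
  · push Not at hr
    have hl : ∀ i, ∃ k, v i = Sum.inl k := fun i => by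
      rcases h : v i with k | j
      · exact ⟨k, rfl⟩
      · exact absurd h (hr i j)
    choose t ht using hl
    have htinj : Function.Injective t := fun i j hij => hv (by rw [ht, ht, hij])
    let σ : Equiv.Perm ι := Equiv.ofBijective t (Finite.injective_iff_bijective.mp htinj)
    have hv' : (fun i => B (v i)) = (fun i => B (Sum.inl i)) ∘ σ := funext fun i => by
      simp [ht, σ]
    rw [hv', AlternatingMap.smul_apply, AlternatingMap.smul_apply, AlternatingMap.map_perm,
      AlternatingMap.map_perm, smul_eq_mul, smul_eq_mul]
    simp only [Units.smul_def, zsmul_eq_mul]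
    ring

end Determinant

section Jacobian

variable {L : Type*} [LieRing L] [LieAlgebra ℂ L]
  {n : ℕ} (b : Basis (Fin n) ℂ L)
  {ι κ : Type*} [Fintype ι] [Fintype κ] [DecidableEq ι] [DecidableEq κ]
  (e : Fin n ≃ ι ⊕ κ) (p : κ → MvPolynomial (Fin n) ℂ)

/-- The Jacobian matrix of the linear forms `B (w i, ·)` together with the polynomials `p j`. -/
noncomputable def jacMatrix (w : ι → L) : Matrix (ι ⊕ κ) (ι ⊕ κ) (MvPolynomial (Fin n) ℂ) :=
  Matrix.of (Sum.elim (fun i s => C (killingForm ℂ L (w i) (b (e.symm s))))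
    (fun j s => pderiv (e.symm s) (p j)))

/-- The value at `x` of the determinant of `jacMatrix`, as an alternating form. -/
noncomputable def jacAlternating (x : L) : L [⋀^ι]→ₗ[ℂ] ℂ :=
  (detAlternating fun j s => eval (fun i => b.repr x i) (pderiv (e.symm s) (p j))).compLinearMap
    (LinearMap.pi fun s => (killingForm ℂ L).flip (b (e.symm s)))

theorem eval_det_jacMatrix (w : ι → L) (x : L) :
    eval (fun i => b.repr x i) (jacMatrix b e p w).det = jacAlternating b e p x w := by
  rw [RingHom.map_det, jacAlternating, AlternatingMap.compLinearMap_apply, detAlternating_apply]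
  congr 1
  ext i s
  rcases i with i | j <;> simp [jacMatrix]

theorem eval_dirDeriv (x y : L) (P : MvPolynomial (Fin n) ℂ) :
    eval (fun i => b.repr x i) (dirDeriv b y P) =
      ∑ i, b.repr y i * eval (fun i => b.repr x i) (pderiv i P) := by
  simp [dirDeriv]

/-- The Killing gradient of `P` at `x`. -/
theorem exists_gradient [FiniteDimensional ℂ L] [LieAlgebra.IsKilling ℂ L] (x : L) (P : MvPolynomial (Fin n) ℂ) :
    ∃ v, ∀ y, killingForm ℂ L v y = eval (fun i => b.repr x i) (dirDeriv b y P) := by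
  obtain ⟨v, hv⟩ := exists_killingForm_eq
    (∑ i, eval (fun i => b.repr x i) (pderiv i P) • b.coord i)
  exact ⟨v, fun y => by simp [hv, eval_dirDeriv, mul_comm]⟩

theorem eval_pderiv_eq_of_gradient {x v : L} {P : MvPolynomial (Fin n) ℂ}
    (hv : ∀ y, killingForm ℂ L v y = eval (fun i => b.repr x i) (dirDeriv b y P)) (k : Fin n) :
    eval (fun i => b.repr x i) (pderiv k P) = killingForm ℂ L v (b k) := by
  classical
  rw [hv, eval_dirDeriv]
  simp [Finsupp.single_apply]

theorem jacAlternating_eq_det (x : L) (v : κ → L)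
    (hv : ∀ j y, killingForm ℂ L (v j) y = eval (fun i => b.repr x i) (dirDeriv b y (p j)))
    (w : ι → L) : jacAlternating b e p x w =
      (Matrix.of fun i s => killingForm ℂ L (Sum.elim w v i) (b (e.symm s))).det := by
  rw [jacAlternating, AlternatingMap.compLinearMap_apply, detAlternating_apply]
  congr 1
  ext i s
  rcases i with i | j
  · simp
  · simp [eval_pderiv_eq_of_gradient b (hv j)]

theorem jacAlternating_eq_zero (x : L) (v : κ → L)
    (hv : ∀ j y, killingForm ℂ L (v j) y = eval (fun i => b.repr x i) (dirDeriv b y (p j)))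
    (w : ι → L) (i : ι) (j : κ) (h : w i = v j) : jacAlternating b e p x w = 0 := by
  rw [jacAlternating_eq_det b e p x v hv]
  exact Matrix.det_zero_of_row_eq (i := Sum.inl i) (j := Sum.inr j) (by simp)
    (by ext s; simp [h])

/-- If all rows annihilate a common nonzero vector, the determinant vanishes. -/
theorem jacAlternating_eq_zero_of_annihilates (x : L) (w : ι → L) (t : L) (ht : t ≠ 0)
    (hw : ∀ i, killingForm ℂ L (w i) t = 0)
    (hp : ∀ j, eval (fun i => b.repr x i) (dirDeriv b t (p j)) = 0) :
    jacAlternating b e p x w = 0 := by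
  rw [jacAlternating, AlternatingMap.compLinearMap_apply, detAlternating_apply]
  refine Matrix.exists_mulVec_eq_zero_iff.mp ⟨fun s => b.repr t (e.symm s), fun h => ht ?_, ?_⟩
  · refine b.repr.map_eq_zero_iff.mp (Finsupp.ext fun k => ?_)
    simpa using congrFun h (e k)
  · ext i
    rcases i with i | j
    · rw [Matrix.mulVec, dotProduct, Pi.zero_apply, ← hw i]
      conv_rhs => rw [← b.sum_repr t, map_sum]
      rw [← e.sum_comp]
      simp [mul_comm]
    · rw [Matrix.mulVec, dotProduct, Pi.zero_apply, ← hp j, eval_dirDeriv, ← e.sum_comp]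
      simp [mul_comm]

theorem linearIndependent_of_jacAlternating_ne_zero (x : L) (v : κ → L)
    (hv : ∀ j y, killingForm ℂ L (v j) y = eval (fun i => b.repr x i) (dirDeriv b y (p j)))
    (w : ι → L) (h : jacAlternating b e p x w ≠ 0) : LinearIndependent ℂ (Sum.elim w v) := by
  rw [jacAlternating_eq_det b e p x v hv] at h
  have h1 := Matrix.linearIndependent_rows_of_det_ne_zero h
  exact LinearIndependent.of_comp (LinearMap.pi fun s => (killingForm ℂ L).flip (b (e.symm s))) h1

/-- At each point of `L`, an alternating form killed by the gradients of the `p j` is proportional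
to the Jacobian. -/
theorem jacAlternating_mul_eq [FiniteDimensional ℂ L] [LieAlgebra.IsKilling ℂ L] (x : L) (g : L [⋀^ι]→ₗ[ℂ] ℂ)
    (hg : ∀ (a : ι → L) (i : ι) (j : κ), (∀ y, killingForm ℂ L (a i) y =
      eval (fun i => b.repr x i) (dirDeriv b y (p j))) → g a = 0) (z a : ι → L) :
    jacAlternating b e p x z * g a = jacAlternating b e p x a * g z := by
  choose v hv using fun j => exists_gradient b x (p j)
  have key : ∀ z a : ι → L, jacAlternating b e p x z ≠ 0 →
      jacAlternating b e p x z * g a = jacAlternating b e p x a * g z := fun z a hz => by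
    have hli := linearIndependent_of_jacAlternating_ne_zero b e p x v hv z hz
    let B : Basis (ι ⊕ κ) ℂ L := basisOfLinearIndependentOfCardEqFinrank' _ hli (by
      rw [finrank_eq_card_basis b, ← Fintype.card_congr e])
    have hB : ∀ i, B i = Sum.elim z v i := fun i => by simp [B]
    have := alternating_mul_eq (jacAlternating b e p x) g B
      (fun a i j h => jacAlternating_eq_zero b e p x v hv a i j (by rw [h, hB]; rfl))
      (fun a i j h => hg a i j (by rw [h, hB]; exact hv j)) a
    simp only [hB, Sum.elim_inl] at this
    rw [this, mul_comm]
  by_cases hz : jacAlternating b e p x z = 0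
  · by_cases ha : jacAlternating b e p x a = 0
    · rw [hz, ha, zero_mul, zero_mul]
    · exact (key a z ha).symm
  · exact key z a hz

/-- No prime polynomial divides all the Jacobian determinants. -/
theorem exists_not_dvd_det_jacMatrix [FiniteDimensional ℂ L] [LieAlgebra.IsKilling ℂ L]
    (hinv : ∀ j, IsInvariantPoly b (p j)) (hindep : AlgebraicIndependent ℂ p)
    (hgen : ∀ P : MvPolynomial (Fin n) ℂ, IsInvariantPoly b P →
      P ∈ Algebra.adjoin ℂ (Set.range p))
    {f : MvPolynomial (Fin n) ℂ} (hf : Prime f) : ∃ w : ι → L, ¬ f ∣ (jacMatrix b e p w).det := by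
  have hprime : (Ideal.span {f}).IsPrime := (Ideal.span_singleton_prime hf.ne_zero).mpr hf
  let Q := MvPolynomial (Fin n) ℂ ⧸ Ideal.span {f}
  let K := FractionRing Q
  have hess : Algebra.EssFiniteType ℂ K :=
    have := Algebra.EssFiniteType.of_isLocalization K (nonZeroDivisors Q)
    Algebra.EssFiniteType.comp ℂ Q K
  let φ : MvPolynomial (Fin n) ℂ →ₐ[ℂ] K :=
    (IsScalarTower.toAlgHom ℂ Q K).comp (Ideal.Quotient.mkₐ ℂ (Ideal.span {f}))
  have hφ : ∀ P, φ P = 0 ↔ f ∣ P := fun P => by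
    change algebraMap Q K (Ideal.Quotient.mk (Ideal.span {f}) P) = 0 ↔ _
    rw [FaithfulSMul.algebraMap_eq_zero_iff, Ideal.Quotient.eq_zero_iff_mem,
      Ideal.mem_span_singleton]
  let d : κ → ι ⊕ κ → K := fun j s => φ (pderiv (e.symm s) (p j))
  have hd : LinearIndependent K d := by
    rw [Fintype.linearIndependent_iff]
    intro g hg
    refine congrFun (differentials_independent_mod_prime (adDeriv b) p hindep
      (fun y j => (isInvariantPoly_iff b _).mp (hinv j) y)
      (fun P hP => hgen P ((isInvariantPoly_iff b P).mpr hP))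
      (fun f hf h y => adDeriv_eq_zero_of_dvd b hf h y) φ hf hφ g fun k => ?_)
    have := congrFun hg (e k)
    simpa [d] using this
  obtain ⟨v, hv⟩ := exists_detAlternating_basis_ne_zero hd (Pi.basisFun K (ι ⊕ κ))
  choose w hw using fun i => exists_killingForm_eq (b.coord (e.symm (v i)))
  refine ⟨w, fun h => hv ?_⟩
  rw [← hφ] at h
  rw [← h, AlgHom.map_det, detAlternating_apply]
  congr 1
  ext i s
  rcases i with i | j
  · simp [jacMatrix, hw, Finsupp.single_apply, Pi.single_apply]
  · simp [jacMatrix, d]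

omit [DecidableEq κ] in
theorem jacMatrix_mul (w w' : ι → L) (u : κ → L)
    (hww : ∀ i s, killingForm ℂ L (w i) (w' s) = if i = s then 1 else 0)
    (hwu : ∀ i s, killingForm ℂ L (w i) (u s) = 0) :
    jacMatrix b e p w * (Matrix.of fun s i => b.repr (Sum.elim w' u i) (e.symm s)).map C =
      Matrix.fromBlocks 1 0 (Matrix.of fun j s => dirDeriv b (w' s) (p j))
        (Matrix.of fun i j => dirDeriv b (u i) (p j)).transpose := by
  have hB : ∀ i y, ∑ s, C (killingForm ℂ L (w i) (b (e.symm s))) * C (b.repr y (e.symm s)) =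
      (C (killingForm ℂ L (w i) y) : MvPolynomial (Fin n) ℂ) := fun i y => by
    have h : killingForm ℂ L (w i) y = ∑ k, killingForm ℂ L (w i) (b k) * b.repr y k := by
      conv_lhs => rw [← b.sum_repr y, map_sum]
      simp [mul_comm]
    rw [h, ← e.sum_comp]
    simp
  have hP : ∀ j y, ∑ s, pderiv (e.symm s) (p j) * C (b.repr y (e.symm s)) =
      dirDeriv b y (p j) := fun j y => by
    rw [← e.sum_comp]
    simp [dirDeriv, mul_comm]
  refine Matrix.ext fun i s => ?_
  rw [Matrix.mul_apply]
  rcases i with i | j <;> rcases s with s | s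
  · refine (hB i (w' s)).trans ?_
    rw [hww, Matrix.fromBlocks_apply₁₁, Matrix.one_apply]
    split_ifs <;> simp
  · refine (hB i (u s)).trans ?_
    rw [hwu, Matrix.fromBlocks_apply₁₂, map_zero, Matrix.zero_apply]
  · exact hP j (w' s)
  · exact hP j (u s)

/-- The Jacobian with respect to a complementary family of directions. -/
theorem exists_det_jacMatrix_eq [FiniteDimensional ℂ L] [LieAlgebra.IsKilling ℂ L] (w : ι → L)
    (hw : LinearIndependent ℂ w) (u : κ → L) (hu : LinearIndependent ℂ u)
    (huw : ∀ i j, killingForm ℂ L (u i) (w j) = 0) :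
    ∃ c : ℂ, c ≠ 0 ∧ (jacMatrix b e p w).det * C c =
      (Matrix.of fun i j => dirDeriv b (u i) (p j)).det := by
  obtain ⟨ψ, hψ⟩ : ∃ ψ : ι → Dual ℂ L, ∀ s i, ψ s (w i) = if i = s then 1 else 0 := by
    obtain ⟨g, hg⟩ := LinearMap.exists_extend (hw.repr : _ →ₗ[ℂ] (ι →₀ ℂ))
    refine ⟨fun s => Finsupp.lapply s ∘ₗ g, fun s i => ?_⟩
    have h1 : g (w i) = Finsupp.single i 1 := by
      have := LinearMap.congr_fun hg ⟨w i, Submodule.subset_span ⟨i, rfl⟩⟩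
      simpa [hw.repr_eq_single i ⟨w i, _⟩ rfl] using this
    simp [h1, Finsupp.single_apply]
  choose w' hw' using fun s => exists_killingForm_eq (ψ s)
  have hww : ∀ i s, killingForm ℂ L (w i) (w' s) = if i = s then 1 else 0 := fun i s => by
    rw [LieModule.traceForm_comm, hw', hψ]
  have hwu : ∀ i s, killingForm ℂ L (w i) (u s) = 0 := fun i s => by
    rw [LieModule.traceForm_comm, huw]
  have hli : LinearIndependent ℂ (Sum.elim w' u) := by
    rw [Fintype.linearIndependent_iff]
    intro g hg
    simp only [Fintype.sum_sum_type, Sum.elim_inl, Sum.elim_inr] at hg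
    have h1 : ∀ i, g (Sum.inl i) = 0 := fun i => by
      have := congrArg (killingForm ℂ L (w i)) hg
      simpa [hww, hwu] using this
    have h2 := Fintype.linearIndependent_iff.mp hu (fun j => g (Sum.inr j)) (by simpa [h1] using hg)
    rintro (i | j)
    exacts [h1 i, h2 j]
  obtain ⟨N, hN⟩ : ∃ N : Matrix (ι ⊕ κ) (ι ⊕ κ) ℂ,
    N = Matrix.of fun s i => b.repr (Sum.elim w' u i) (e.symm s) := ⟨_, rfl⟩
  refine ⟨N.det, ?_, ?_⟩
  · rw [← Matrix.det_transpose]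
    refine IsUnit.ne_zero ((Matrix.isUnit_iff_isUnit_det _).mp
      (Matrix.linearIndependent_rows_iff_isUnit.mp ?_))
    have h1 := hli.map' (b.reindex e).equivFun.toLinearMap (LinearEquiv.ker _)
    have h2 : ⇑(b.reindex e).equivFun.toLinearMap ∘ Sum.elim w' u = N.transpose.row := by
      ext i s
      simp [hN, Basis.equivFun_apply]
    rwa [h2] at h1
  · have hmul := jacMatrix_mul b e p w w' u hww hwu
    rw [← hN] at hmul
    have hC : (C N.det : MvPolynomial (Fin n) ℂ) = (N.map C).det := RingHom.map_det C N
    rw [hC, ← Matrix.det_mul, hmul]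
    exact (Matrix.det_fromBlocks_zero₁₂ _ _ _).trans
      (by rw [Matrix.det_one, one_mul, Matrix.det_transpose])

end Jacobian

theorem isHomogeneous_det {σ τ : Type*} [Fintype τ] [DecidableEq τ]
    (M : Matrix τ τ (MvPolynomial σ ℂ)) (d : τ → ℕ) (h : ∀ i j, (M i j).IsHomogeneous (d i)) :
    M.det.IsHomogeneous (∑ i, d i) := by
  rw [Matrix.det_apply']
  refine IsHomogeneous.sum _ _ _ fun s _ => ?_
  have h1 := IsHomogeneous.prod Finset.univ (fun i => M (s i) i) (fun i => d (s i))
    fun i _ => h _ _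
  rw [Equiv.sum_comp s d] at h1
  have h2 : ((Equiv.Perm.sign s : ℤ) : MvPolynomial σ ℂ).IsHomogeneous 0 := by
    rw [← map_intCast (C (σ := σ) (R := ℂ))]
    exact isHomogeneous_C _ _
  simpa using h2.mul h1

section Pairing

variable {L : Type*} [AddCommGroup L] [Module ℂ L]

/-- The product of the values of a bilinear form on consecutive pairs of vectors. -/
def pairProduct (ω : L →ₗ[ℂ] L →ₗ[ℂ] ℂ) (r : ℕ) :
    MultilinearMap ℂ (fun _ : Fin (2 * r) => L) ℂ where
  toFun w := ∏ i : Fin r, ω (w ⟨2 * i.1, by have := i.isLt; omega⟩)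
    (w ⟨2 * i.1 + 1, by have := i.isLt; omega⟩)
  map_update_add' {inst} w k x y := by
    have hk := k.isLt
    simp only [← Finset.mul_prod_erase Finset.univ _
      (Finset.mem_univ (⟨k.1 / 2, by omega⟩ : Fin r))]
    have hrest : ∀ z, ∏ i ∈ Finset.univ.erase (⟨k.1 / 2, by omega⟩ : Fin r),
        ω (Function.update w k z ⟨2 * i.1, by have := i.isLt; omega⟩)
          (Function.update w k z ⟨2 * i.1 + 1, by have := i.isLt; omega⟩) =
        ∏ i ∈ Finset.univ.erase (⟨k.1 / 2, by omega⟩ : Fin r),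
        ω (w ⟨2 * i.1, by have := i.isLt; omega⟩)
          (w ⟨2 * i.1 + 1, by have := i.isLt; omega⟩) := fun z => by
      refine Finset.prod_congr rfl fun i hi => ?_
      have hi' : i.1 ≠ k.1 / 2 := fun h => (Finset.mem_erase.mp hi).1 (Fin.ext h)
      rw [Function.update_of_ne (fun h => hi' (by rw [← h]; simp; try omega)),
        Function.update_of_ne (fun h => hi' (by rw [← h]; simp; try omega))]
    rw [hrest, hrest, hrest, ← add_mul]
    congr 1
    rcases Nat.mod_two_eq_zero_or_one k.1 with h0 | h0
    · have h1 : (⟨2 * (k.1 / 2), by omega⟩ : Fin (2 * r)) = k := Fin.ext (by simp; omega)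
      have h2 : (⟨2 * (k.1 / 2) + 1, by omega⟩ : Fin (2 * r)) ≠ k :=
        fun h => by have := congrArg Fin.val h; simp at this; omega
      simp only [h1, Function.update_self, Function.update_of_ne h2, map_add, LinearMap.add_apply]
    · have h1 : (⟨2 * (k.1 / 2) + 1, by omega⟩ : Fin (2 * r)) = k := Fin.ext (by simp; omega)
      have h2 : (⟨2 * (k.1 / 2), by omega⟩ : Fin (2 * r)) ≠ k :=
        fun h => by have := congrArg Fin.val h; simp at this; omega
      simp only [h1, Function.update_self, Function.update_of_ne h2, map_add]
  map_update_smul' {inst} w k c x := by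
    have hk := k.isLt
    simp only [← Finset.mul_prod_erase Finset.univ _
      (Finset.mem_univ (⟨k.1 / 2, by omega⟩ : Fin r))]
    have hrest : ∀ z, ∏ i ∈ Finset.univ.erase (⟨k.1 / 2, by omega⟩ : Fin r),
        ω (Function.update w k z ⟨2 * i.1, by have := i.isLt; omega⟩)
          (Function.update w k z ⟨2 * i.1 + 1, by have := i.isLt; omega⟩) =
        ∏ i ∈ Finset.univ.erase (⟨k.1 / 2, by omega⟩ : Fin r),
        ω (w ⟨2 * i.1, by have := i.isLt; omega⟩)
          (w ⟨2 * i.1 + 1, by have := i.isLt; omega⟩) := fun z => by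
      refine Finset.prod_congr rfl fun i hi => ?_
      have hi' : i.1 ≠ k.1 / 2 := fun h => (Finset.mem_erase.mp hi).1 (Fin.ext h)
      rw [Function.update_of_ne (fun h => hi' (by rw [← h]; simp; try omega)),
        Function.update_of_ne (fun h => hi' (by rw [← h]; simp; try omega))]
    rw [hrest, hrest, smul_eq_mul, ← mul_assoc]
    congr 1
    rcases Nat.mod_two_eq_zero_or_one k.1 with h0 | h0
    · have h1 : (⟨2 * (k.1 / 2), by omega⟩ : Fin (2 * r)) = k := Fin.ext (by simp; omega)
      have h2 : (⟨2 * (k.1 / 2) + 1, by omega⟩ : Fin (2 * r)) ≠ k :=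
        fun h => by have := congrArg Fin.val h; simp at this; omega
      simp only [h1, Function.update_self, Function.update_of_ne h2, map_smul,
        LinearMap.smul_apply, smul_eq_mul]
    · have h1 : (⟨2 * (k.1 / 2) + 1, by omega⟩ : Fin (2 * r)) = k := Fin.ext (by simp; omega)
      have h2 : (⟨2 * (k.1 / 2), by omega⟩ : Fin (2 * r)) ≠ k :=
        fun h => by have := congrArg Fin.val h; simp at this; omega
      simp only [h1, Function.update_self, Function.update_of_ne h2, map_smul, smul_eq_mul]

theorem pairProduct_apply (ω : L →ₗ[ℂ] L →ₗ[ℂ] ℂ) (r : ℕ) (w : Fin (2 * r) → L) :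
    pairProduct ω r w = ∏ i : Fin r, ω (w ⟨2 * i.1, by have := i.isLt; omega⟩)
      (w ⟨2 * i.1 + 1, by have := i.isLt; omega⟩) := rfl

/-- The Pfaffian-type alternating form attached to a bilinear form. -/
noncomputable def pairAlternating (ω : L →ₗ[ℂ] L →ₗ[ℂ] ℂ) (r : ℕ) : L [⋀^Fin (2 * r)]→ₗ[ℂ] ℂ :=
  (1 / ((Nat.factorial r : ℂ) * 2 ^ r)) • MultilinearMap.alternatization (pairProduct ω r)

theorem pairAlternating_apply (ω : L →ₗ[ℂ] L →ₗ[ℂ] ℂ) (r : ℕ) (w : Fin (2 * r) → L) :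
    pairAlternating ω r w = (1 / ((Nat.factorial r : ℂ) * 2 ^ r)) *
      ∑ σ : Equiv.Perm (Fin (2 * r)), ((Equiv.Perm.sign σ : ℤ) : ℂ) *
        ∏ i : Fin r, ω (w (σ ⟨2 * i.1, by have := i.isLt; omega⟩))
          (w (σ ⟨2 * i.1 + 1, by have := i.isLt; omega⟩)) := by
  rw [pairAlternating, AlternatingMap.smul_apply, MultilinearMap.alternatization_apply, smul_eq_mul]
  congr 1
  refine Finset.sum_congr rfl fun σ _ => ?_
  rw [Units.smul_def, zsmul_eq_mul, MultilinearMap.domDomCongr_apply, pairProduct_apply]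

theorem pairAlternating_eq_zero (ω : L →ₗ[ℂ] L →ₗ[ℂ] ℂ) (r : ℕ) (w : Fin (2 * r) → L)
    (k : Fin (2 * r)) (h1 : ∀ y, ω (w k) y = 0) (h2 : ∀ y, ω y (w k) = 0) :
    pairAlternating ω r w = 0 := by
  rw [pairAlternating_apply, Finset.sum_eq_zero, mul_zero]
  intro σ _
  obtain ⟨l, rfl⟩ := σ.surjective k
  have hl := l.isLt
  rw [Finset.prod_eq_zero (Finset.mem_univ (⟨l.1 / 2, by omega⟩ : Fin r)), mul_zero]
  rcases Nat.mod_two_eq_zero_or_one l.1 with h0 | h0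
  · have h3 : (⟨2 * (l.1 / 2), by omega⟩ : Fin (2 * r)) = l := Fin.ext (by simp; omega)
    simp only [h3, h1]
  · have h3 : (⟨2 * (l.1 / 2) + 1, by omega⟩ : Fin (2 * r)) = l := Fin.ext (by simp; omega)
    simp only [h3, h2]

end Pairing

section Gamma

variable {L : Type*} [LieRing L] [LieAlgebra ℂ L] [FiniteDimensional ℂ L] {n : ℕ}
  (b : Basis (Fin n) ℂ L)

/-- The bilinear form `(y, z) ↦ B ([y, z], x)`. -/
noncomputable def bracketForm (x : L) : L →ₗ[ℂ] L →ₗ[ℂ] ℂ :=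
  LinearMap.compr₂ (LieAlgebra.ad ℂ L : L →ₗ[ℂ] L →ₗ[ℂ] L) ((killingForm ℂ L).flip x)

omit [FiniteDimensional ℂ L] in
theorem bracketForm_apply (x y z : L) : bracketForm x y z = killingForm ℂ L ⁅y, z⁆ x := rfl

theorem gammaVal_eq (r : ℕ) (w : Fin (2 * r) → L) (x : L) :
    GammaVal r w x = pairAlternating (bracketForm x) r w := by
  rw [pairAlternating_apply]
  rfl

omit [FiniteDimensional ℂ L] in
theorem pairAlternating_bracketForm_eq_zero {P : MvPolynomial (Fin n) ℂ}
    (hP : IsInvariantPoly b P) (r : ℕ) (x : L) (w : Fin (2 * r) → L) (k : Fin (2 * r))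
    (h : ∀ y, killingForm ℂ L (w k) y = eval (fun i => b.repr x i) (dirDeriv b y P)) :
    pairAlternating (bracketForm x) r w = 0 := by
  have h1 : ∀ y, bracketForm x (w k) y = 0 := fun y => by
    rw [bracketForm_apply, LieModule.traceForm_apply_lie_apply, h, hP]
  refine pairAlternating_eq_zero _ r w k h1 fun y => ?_
  rw [bracketForm_apply, ← lie_skew, map_neg, LinearMap.neg_apply, ← bracketForm_apply, h1, neg_zero]

/-- `GammaVal` as a polynomial. -/
noncomputable def gammaPoly (r : ℕ) (w : Fin (2 * r) → L) : MvPolynomial (Fin n) ℂ :=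
  C (1 / ((Nat.factorial r : ℂ) * 2 ^ r)) *
    ∑ σ : Equiv.Perm (Fin (2 * r)), C ((Equiv.Perm.sign σ : ℤ) : ℂ) *
      ∏ i : Fin r, linForm b (killingForm ℂ L
        ⁅w (σ ⟨2 * i.1, by have := i.isLt; omega⟩),
          w (σ ⟨2 * i.1 + 1, by have := i.isLt; omega⟩)⁆)

theorem eval_gammaPoly (r : ℕ) (w : Fin (2 * r) → L) (x : L) :
    eval (fun i => b.repr x i) (gammaPoly b r w) = GammaVal r w x := by
  simp only [gammaPoly, GammaVal, map_mul, map_sum, map_prod, eval_C, eval_linForm]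

omit [FiniteDimensional ℂ L] in
theorem gammaPoly_isHomogeneous (r : ℕ) (w : Fin (2 * r) → L) :
    (gammaPoly b r w).IsHomogeneous r := by
  have h1 : ∀ (c : ℂ) (Q : MvPolynomial (Fin n) ℂ), Q.IsHomogeneous r →
      (C c * Q).IsHomogeneous r := fun c Q hQ => by
    simpa using (isHomogeneous_C (Fin n) c).mul hQ
  refine h1 _ _ (IsHomogeneous.sum _ _ _ fun σ _ => h1 _ _ ?_)
  have := IsHomogeneous.prod Finset.univ (fun i : Fin r => linForm b (killingForm ℂ L
        ⁅w (σ ⟨2 * i.1, by have := i.isLt; omega⟩),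
          w (σ ⟨2 * i.1 + 1, by have := i.isLt; omega⟩)⁆)) (fun _ => 1)
    fun i _ => linForm_isHomogeneous b _
  simpa using this

omit [FiniteDimensional ℂ L] in
theorem det_jacMatrix_isHomogeneous {r : ℕ} {κ : Type*} [Fintype κ] [DecidableEq κ]
    (e : Fin n ≃ Fin (2 * r) ⊕ κ) (p : κ → MvPolynomial (Fin n) ℂ) (m : κ → ℕ)
    (hhom : ∀ j, (p j).IsHomogeneous (m j + 1)) (w : Fin (2 * r) → L) :
    (jacMatrix b e p w).det.IsHomogeneous (∑ j, m j) := by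
  have := isHomogeneous_det (jacMatrix b e p w) (Sum.elim (fun _ => 0) m) (by
    rintro (i | j) s
    · exact isHomogeneous_C _ _
    · exact (hhom j).pderiv)
  simpa using this

/-- The proportionality of `GammaVal` and the Jacobian. -/
theorem det_jacMatrix_mul_gammaPoly [LieAlgebra.IsKilling ℂ L] {r : ℕ} {κ : Type*} [Fintype κ]
    [DecidableEq κ] (e : Fin n ≃ Fin (2 * r) ⊕ κ) (p : κ → MvPolynomial (Fin n) ℂ)
    (hinv : ∀ j, IsInvariantPoly b (p j)) (z w : Fin (2 * r) → L) :
    (jacMatrix b e p z).det * gammaPoly b r w = (jacMatrix b e p w).det * gammaPoly b r z := by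
  refine ext_eval b fun x => ?_
  simp only [map_mul, eval_det_jacMatrix, eval_gammaPoly, gammaVal_eq]
  exact jacAlternating_mul_eq b e p x _
    (fun a i j h => pairAlternating_bracketForm_eq_zero b (hinv j) r x a i h) z w

/-- If some `GammaVal` is nonzero, then the Jacobians divide the values of `GammaVal`. -/
theorem exists_mul_det_jacMatrix_eq [LieAlgebra.IsKilling ℂ L] {r : ℕ} {κ : Type*} [Fintype κ]
    [DecidableEq κ] (e : Fin n ≃ Fin (2 * r) ⊕ κ) (p : κ → MvPolynomial (Fin n) ℂ)
    (hinv : ∀ j, IsInvariantPoly b (p j)) (hindep : AlgebraicIndependent ℂ p)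
    (hgen : ∀ P : MvPolynomial (Fin n) ℂ, IsInvariantPoly b P →
      P ∈ Algebra.adjoin ℂ (Set.range p))
    {z : Fin (2 * r) → L} (hz : gammaPoly b r z ≠ 0) :
    ∃ c : MvPolynomial (Fin n) ℂ, ∀ w, c * (jacMatrix b e p w).det = gammaPoly b r w := by
  obtain ⟨w₀, hw₀⟩ : ∃ w, (jacMatrix b e p w).det ≠ 0 := by
    rcases n.eq_zero_or_pos with rfl | hn
    · have : IsEmpty (Fin (2 * r) ⊕ κ) := e.symm.isEmpty
      exact ⟨z, by simp⟩
    · obtain ⟨w, hw⟩ := exists_not_dvd_det_jacMatrix (ι := Fin (2 * r)) b e p hinv hindep hgen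
        (X_prime (i := (⟨0, hn⟩ : Fin n)))
      exact ⟨w, fun h => hw (h ▸ dvd_zero _)⟩
  have hE : (jacMatrix b e p z).det ≠ 0 := fun h => by
    have := det_jacMatrix_mul_gammaPoly b e p hinv z w₀
    rw [h, zero_mul] at this
    exact mul_ne_zero hw₀ hz this.symm
  obtain ⟨a, c, d, hac, ha, hc⟩ := UniqueFactorizationMonoid.exists_reduced_factors _ hE
    (gammaPoly b r z)
  have hd : d ≠ 0 := by
    rintro rfl
    exact hE (by rw [← ha, zero_mul])
  have hrel : ∀ w, a * gammaPoly b r w = c * (jacMatrix b e p w).det := fun w => by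
    have h := det_jacMatrix_mul_gammaPoly b e p hinv z w
    rw [← ha, ← hc] at h
    exact mul_left_cancel₀ hd (by linear_combination h)
  have hunit : IsUnit a := by
    by_contra hu
    have ha0 : a ≠ 0 := by
      rintro rfl
      exact hE (by rw [← ha, mul_zero])
    obtain ⟨f, hf, hfa⟩ := WfDvdMonoid.exists_irreducible_factor hu ha0
    obtain ⟨w, hw⟩ := exists_not_dvd_det_jacMatrix (ι := Fin (2 * r)) b e p hinv hindep hgen hf.prime
    have h1 : f ∣ c * (jacMatrix b e p w).det := hrel w ▸ hfa.mul_right _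
    rcases hf.prime.dvd_or_dvd h1 with h2 | h2
    · exact hf.not_isUnit (hac hfa h2)
    · exact hw h2
  obtain ⟨v, hv⟩ := hunit.exists_left_inv
  exact ⟨v * c, fun w => by rw [mul_assoc, ← hrel, ← mul_assoc, hv, one_mul]⟩

end Gamma

section Roots

open LieAlgebra LieAlgebra.IsKilling LieModule

variable {L : Type*} [LieRing L] [LieAlgebra ℂ L] [FiniteDimensional ℂ L] [IsKilling ℂ L]
  (H : LieSubalgebra ℂ L) [H.IsCartanSubalgebra]

theorem finrank_eq_finrank_cartan_add_card_root :
    finrank ℂ L = finrank ℂ H + H.root.card := by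
  classical
  have hint := DirectSum.isInternal_submodule_of_iSupIndep_of_iSup_eq_top
    (LieSubmodule.iSupIndep_toSubmodule.mpr (iSupIndep_genWeightSpace' ℂ H L))
    (by rw [← LieSubmodule.iSup_toSubmodule, iSup_genWeightSpace_eq_top', LieSubmodule.top_toSubmodule])
  have h1 : finrank ℂ L = ∑ χ : Weight ℂ H L, finrank ℂ (genWeightSpace L χ) := by
    rw [← (LinearEquiv.ofBijective (DirectSum.coeLinearMap _) hint).finrank_eq,
      Module.finrank_directSum]
    rfl
  have h2 : ∑ χ ∈ H.root, finrank ℂ (genWeightSpace L χ) = H.root.card := by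
    rw [Finset.card_eq_sum_ones]
    refine Finset.sum_congr rfl fun χ hχ => ?_
    exact finrank_rootSpace_eq_one χ (by simpa [LieSubalgebra.root] using hχ)
  rw [h1, ← Finset.sum_add_sum_compl H.root, h2, add_comm]
  congr 1
  rcases subsingleton_or_nontrivial L with hL | hL
  · have h3 : ∀ N : LieSubmodule ℂ H L, finrank ℂ N = 0 := fun N => finrank_zero_of_subsingleton
    simp only [h3, Finset.sum_const_zero]
    exact finrank_zero_of_subsingleton.symm
  · have h3 : H.rootᶜ = {(0 : Weight ℂ H L)} := by
      ext χ
      simp only [LieSubalgebra.root, Finset.mem_compl, Finset.mem_filter, Finset.mem_univ, true_and,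
        not_not, Finset.mem_singleton]
      exact ⟨fun h => DFunLike.coe_injective h, fun h => h ▸ Weight.isZero_zero⟩
    rw [h3, Finset.sum_singleton]
    have h4 := rootSpace_zero_eq ℂ L H
    rw [FunLike.coe_zero, show genWeightSpace L (0 : H → ℂ) = H.toLieSubmodule from h4]
    rfl

/-- A choice of half of the nonzero complex numbers. -/
def IsPos (z : ℂ) : Prop := 0 < z.re ∨ (z.re = 0 ∧ 0 < z.im)

theorem IsPos.add {z w : ℂ} (hz : IsPos z) (hw : IsPos w) : IsPos (z + w) := by
  simp only [IsPos, Complex.add_re, Complex.add_im] at *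
  rcases hz with h | ⟨h, h'⟩ <;> rcases hw with k | ⟨k, k'⟩
  · left; linarith
  · left; linarith
  · left; linarith
  · right; constructor <;> linarith

theorem IsPos.ne_zero {z : ℂ} (hz : IsPos z) : z ≠ 0 := by
  rintro rfl
  simp [IsPos] at hz

theorem isPos_neg_iff {z : ℂ} (hz : z ≠ 0) : IsPos (-z) ↔ ¬ IsPos z := by
  have h : z.re ≠ 0 ∨ z.im ≠ 0 := by
    by_contra! h
    exact hz (Complex.ext h.1 h.2)
  simp only [IsPos, Complex.neg_re, Complex.neg_im]
  constructor
  · rintro (h1 | ⟨h1, h2⟩) (h3 | ⟨h3, h4⟩) <;> linarith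
  · intro h1
    push Not at h1
    rcases lt_trichotomy z.re 0 with h2 | h2 | h2
    · left; linarith
    · right
      refine ⟨by linarith, ?_⟩
      have h3 := h1.2 h2
      rcases h with h | h
      · exact absurd h2 h
      · have := lt_of_le_of_ne h3 h
        linarith
    · linarith [h1.1]

theorem exists_root_vectors (r : ℕ) (hr : finrank ℂ L = finrank ℂ H + 2 * r) :
    ∃ (x₀ : H) (α : Fin r → Dual ℂ H) (y z : Fin r → L),
      (∀ i, α i x₀ ≠ 0) ∧ (∀ i j, i ≠ j → ∀ k : ℂ, α j ≠ k • α i) ∧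
      (∀ i (h : H), ⁅(h : L), y i⁆ = α i h • y i) ∧
      (∀ i, ⁅y i, z i⁆ ∈ H ∧ ⁅y i, z i⁆ ≠ 0) ∧
      (∀ i, ∀ t ∈ H, killingForm ℂ L (y i) t = 0 ∧ killingForm ℂ L (z i) t = 0) ∧
      (∀ i j, killingForm ℂ L ⁅y i, y j⁆ x₀ = 0) ∧ (∀ i j, killingForm ℂ L ⁅z i, z j⁆ x₀ = 0) ∧
      (∀ i j, killingForm ℂ L ⁅y i, z j⁆ x₀ ≠ 0 ↔ i = j) := by
  classical
  obtain ⟨x₀, hx₀⟩ := Module.Dual.exists_forall_ne_zero_of_forall_exists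
    (fun χ : H.root => (Weight.toLinear ℂ H L χ : Dual ℂ H)) (fun χ => by
      by_contra! h
      exact LieSubalgebra.isNonZero_coe_root χ (funext h))
  have hx₀' : ∀ χ : Weight ℂ H L, χ.IsNonZero → χ x₀ ≠ 0 := fun χ hχ =>
    hx₀ ⟨χ, by simpa [LieSubalgebra.root] using hχ⟩
  let P : Finset (Weight ℂ H L) := H.root.filter fun χ => IsPos (χ x₀)
  have hP : ∀ χ, χ ∈ P ↔ χ.IsNonZero ∧ IsPos (χ x₀) := fun χ => by simp [P, LieSubalgebra.root]
  have hcard : P.card = r := by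
    have h1 := finrank_eq_finrank_cartan_add_card_root H
    have h2 := Finset.card_filter_add_card_filter_not (s := H.root) fun χ => IsPos (χ x₀)
    have h3 : P.card = (H.root.filter fun χ => ¬ IsPos (χ x₀)).card := by
      refine Finset.card_bij' (fun χ _ => -χ) (fun χ _ => -χ) ?_ ?_ (by simp) (by simp)
      · intro χ hχ
        obtain ⟨h4, h5⟩ := (hP χ).mp hχ
        have h6 : χ x₀ ≠ 0 := hx₀' χ h4
        simp only [Finset.mem_filter, LieSubalgebra.root, Finset.mem_univ, true_and]
        refine ⟨h4.neg, ?_⟩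
        rw [Weight.coe_neg, Pi.neg_apply, isPos_neg_iff h6, not_not]
        exact h5
      · intro χ hχ
        simp only [Finset.mem_filter, LieSubalgebra.root, Finset.mem_univ, true_and] at hχ
        refine (hP _).mpr ⟨hχ.1.neg, ?_⟩
        rw [Weight.coe_neg, Pi.neg_apply, isPos_neg_iff (hx₀' χ hχ.1)]
        exact hχ.2
    have h4 : (H.root.filter fun χ => IsPos (χ x₀)).card = P.card := rfl
    omega
  let E : Fin r ≃ P := (finCongr hcard.symm).trans P.equivFin.symm
  let α : Fin r → Weight ℂ H L := fun i => E i
  have hα : ∀ i, (α i).IsNonZero := fun i => ((hP _).mp (E i).2).1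
  have hpos : ∀ i, IsPos (α i x₀) := fun i => ((hP _).mp (E i).2).2
  have hinj : Function.Injective α := fun i j h => E.injective (Subtype.ext h)
  choose t y z ht hy hz using fun i => exists_isSl2Triple_of_weight_isNonZero (hα i)
  have hyz : ∀ i, ⁅y i, z i⁆ ∈ H := fun i => by
    have h1 : ⁅y i, z i⁆ ∈ rootSpace H (α i + -α i : H → ℂ) :=
      LieAlgebra.lie_mem_genWeightSpace_of_mem_genWeightSpace (hy i) (hz i)
    rw [add_neg_cancel, rootSpace_zero_eq] at h1
    exact h1
  have hH : ∀ t ∈ H, t ∈ rootSpace H (0 : H → ℂ) := fun t ht => by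
    rw [rootSpace_zero_eq]
    exact ht
  have hlie : ∀ (χ : H → ℂ) (a : L), a ∈ rootSpace H χ → ∀ h : H, ⁅(h : L), a⁆ = χ h • a :=
    fun χ a ha h => lie_eq_smul_of_mem_rootSpace ha h
  have hzero : ∀ (χ ψ : H → ℂ) (a c : L), a ∈ rootSpace H χ → c ∈ rootSpace H ψ → χ + ψ ≠ 0 →
      killingForm ℂ L ⁅a, c⁆ x₀ = 0 := fun χ ψ a c ha hc hne => by
    have h1 : ⁅c, (x₀ : L)⁆ = -(ψ x₀ • c) := by
      rw [← lie_skew, hlie ψ c hc]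
    rw [LieModule.traceForm_apply_lie_apply, h1, map_neg, map_smul,
      killingForm_apply_eq_zero_of_mem_rootSpace_of_add_ne_zero ℂ L H ha hc hne, smul_zero, neg_zero]
  refine ⟨x₀, fun i => (α i).toLinear, y, z, fun i => hx₀' _ (hα i), ?_, ?_, ?_, ?_, ?_, ?_, ?_⟩
  · intro i j hij k hk
    have hk' : (α j : H → ℂ) = k • α i := funext fun h => LinearMap.congr_fun hk h
    rcases eq_neg_or_eq_of_eq_smul (α i) (α j) (hα j) k hk' with h | h
    · have h1 := hpos j
      rw [h, Weight.coe_neg, Pi.neg_apply, isPos_neg_iff (hpos i).ne_zero] at h1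
      exact h1 (hpos i)
    · exact hij (hinj h).symm
  · exact fun i h => lie_eq_smul_of_mem_rootSpace (hy i) h
  · exact fun i => ⟨hyz i, by rw [(ht i).lie_e_f]; exact (ht i).h_ne_zero⟩
  · intro i t ht
    refine ⟨killingForm_apply_eq_zero_of_mem_rootSpace_of_add_ne_zero ℂ L H (hy i) (hH t ht) ?_,
      killingForm_apply_eq_zero_of_mem_rootSpace_of_add_ne_zero ℂ L H (hz i) (hH t ht) ?_⟩
    · rw [add_zero]
      exact hα i
    · rw [add_zero, neg_ne_zero]
      exact hα i
  · exact fun i j => hzero _ _ _ _ (hy i) (hy j) fun h =>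
      ((hpos i).add (hpos j)).ne_zero (congrFun h x₀)
  · refine fun i j => hzero _ _ _ _ (hz i) (hz j) fun h =>
      ((hpos i).add (hpos j)).ne_zero ?_
    have := congrFun h x₀
    simp only [Pi.add_apply, Pi.neg_apply, Pi.zero_apply] at this
    linear_combination -this
  · intro i j
    constructor
    · contrapose!
      intro hij
      refine hzero _ _ _ _ (hy i) (hz j) fun h => hij (hinj (DFunLike.coe_injective ?_))
      exact add_neg_eq_zero.mp h
    · rintro rfl
      intro h
      have h1 : killingForm ℂ L (y i) (z i) ≠ 0 := fun h1 => by
        have h2 := lie_eq_killingForm_smul_of_mem_rootSpace_of_mem_rootSpace_neg (hy i) (hz i)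
        rw [h1, zero_smul, (ht i).lie_e_f] at h2
        exact (ht i).h_ne_zero (by simpa using h2)
      have h2 : ⁅z i, (x₀ : L)⁆ = α i x₀ • z i := by
        rw [← lie_skew, hlie _ _ (hz i), Pi.neg_apply, neg_smul, neg_neg]
      rw [LieModule.traceForm_apply_lie_apply, h2, map_smul, smul_eq_mul] at h
      exact mul_ne_zero (hx₀' _ (hα i)) h1 h

end Roots

section Pfaffian

theorem sign_mul_prod_eq {r : ℕ} (F : Fin r × Fin 2 → Fin r × Fin 2 → ℂ)
    (hF : ∀ a c, F a c ≠ 0 → a.1 = c.1 ∧ a.2 ≠ c.2) (hskew : ∀ a c, F c a = -F a c)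
    (σ : Equiv.Perm (Fin r × Fin 2)) (hσ : ∏ i, F (σ (i, 0)) (σ (i, 1)) ≠ 0) :
    ((Equiv.Perm.sign σ : ℤ) : ℂ) * ∏ i, F (σ (i, 0)) (σ (i, 1)) = ∏ i, F (i, 0) (i, 1) := by
  have hne : ∀ i, (σ (i, 0)).1 = (σ (i, 1)).1 ∧ (σ (i, 0)).2 ≠ (σ (i, 1)).2 :=
    fun i => hF _ _ (Finset.prod_ne_zero_iff.mp hσ i (Finset.mem_univ i))
  let s : Fin r → Equiv.Perm (Fin 2) := fun i => Equiv.swap 0 (σ (i, 0)).2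
  have hs : ∀ i k, σ (i, k) = ((σ (i, 0)).1, s i k) := fun i k => by
    have h1 : ∀ a c : Fin 2, a ≠ c → Equiv.swap 0 a 1 = c := by decide
    refine Prod.ext ?_ ?_
    · fin_cases k
      · rfl
      · exact (hne i).1.symm
    · fin_cases k
      · simp [s]
      · exact (h1 _ _ (hne i).2).symm
  have hinj : Function.Injective fun i => (σ (i, 0)).1 := fun i j hij => by
    have h1 : σ (j, (s j).symm (s i 0)) = σ (i, 0) := by
      rw [hs i 0, hs j, Equiv.apply_symm_apply]
      exact Prod.ext hij.symm rfl
    exact (congrArg Prod.fst (σ.injective h1)).symm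
  let π : Equiv.Perm (Fin r) := Equiv.ofBijective _ (Finite.injective_iff_bijective.mp hinj)
  have hdecomp : σ = Equiv.prodCongrLeft (fun _ : Fin 2 => π) * Equiv.prodCongrRight s := by
    ext1 ⟨i, k⟩
    rw [hs]
    rfl
  have hsign : (Equiv.Perm.sign σ : ℤ) = ∏ i, (Equiv.Perm.sign (s i) : ℤ) := by
    rw [hdecomp, Equiv.Perm.sign_mul, Equiv.Perm.sign_prodCongrLeft, Equiv.Perm.sign_prodCongrRight]
    simp
  have hfac : ∀ i, F (σ (i, 0)) (σ (i, 1)) =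
      ((Equiv.Perm.sign (s i) : ℤ) : ℂ) * F (π i, 0) (π i, 1) := fun i => by
    rw [hs i 0, hs i 1]
    change F (π i, s i 0) (π i, s i 1) = _
    have h2 : s i = 1 ∨ s i = Equiv.swap 0 1 := by
      generalize s i = a
      revert a
      decide
    rcases h2 with h2 | h2
    · simp [h2]
    · rw [h2, Equiv.Perm.sign_swap (by decide), Equiv.swap_apply_left, Equiv.swap_apply_right,
        hskew]
      simp
  simp only [hfac]
  rw [Finset.prod_mul_distrib, Equiv.prod_comp π (fun i => F (i, 0) (i, 1)), ← mul_assoc, hsign,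
    Int.cast_prod, ← Finset.prod_mul_distrib]
  have h3 : ∀ i, ((Equiv.Perm.sign (s i) : ℤ) : ℂ) * ((Equiv.Perm.sign (s i) : ℤ) : ℂ) = 1 :=
    fun i => by
      rcases Int.units_eq_one_or (Equiv.Perm.sign (s i)) with h | h <;> simp [h]
  simp [h3]

theorem pairAlternating_ne_zero {L : Type*} [AddCommGroup L] [Module ℂ L]
    (ω : L →ₗ[ℂ] L →ₗ[ℂ] ℂ) (hskew : ∀ a c, ω c a = -ω a c) {r : ℕ} (y z : Fin r → L)
    (hy : ∀ i j, ω (y i) (y j) = 0) (hz : ∀ i j, ω (z i) (z j) = 0)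
    (hyz : ∀ i j, ω (y i) (z j) ≠ 0 ↔ i = j) (w : Fin (2 * r) → L)
    (hw₀ : ∀ i : Fin r, w ⟨2 * i.1, by have := i.isLt; omega⟩ = y i)
    (hw₁ : ∀ i : Fin r, w ⟨2 * i.1 + 1, by have := i.isLt; omega⟩ = z i) :
    pairAlternating ω r w ≠ 0 := by
  let E : Fin r × Fin 2 ≃ Fin (2 * r) := finProdFinEquiv.trans (finCongr (mul_comm r 2))
  have hE₀ : ∀ i, E (i, 0) = ⟨2 * i.1, by have := i.isLt; omega⟩ := fun i => Fin.ext (by simp [E])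
  have hE₁ : ∀ i, E (i, 1) = ⟨2 * i.1 + 1, by have := i.isLt; omega⟩ := fun i =>
    Fin.ext (by simp [E, add_comm])
  let F : Fin r × Fin 2 → Fin r × Fin 2 → ℂ := fun a c => ω (w (E a)) (w (E c))
  have hF : ∀ a c, F a c ≠ 0 → a.1 = c.1 ∧ a.2 ≠ c.2 := by
    rintro ⟨i, k⟩ ⟨j, l⟩ h
    simp only [F] at h
    fin_cases k <;> fin_cases l <;>
      simp only [Fin.zero_eta, Fin.mk_one, hE₀, hE₁, hw₀, hw₁, hy, hz, ne_eq, not_true_eq_false] at h ⊢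
    · exact ⟨(hyz i j).mp h, by simp⟩
    · rw [hskew, neg_eq_zero] at h
      exact ⟨((hyz j i).mp h).symm, by simp⟩
  let T : Equiv.Perm (Fin (2 * r)) → ℂ := fun σ => ((Equiv.Perm.sign σ : ℤ) : ℂ) *
        ∏ i : Fin r, ω (w (σ ⟨2 * i.1, by have := i.isLt; omega⟩))
          (w (σ ⟨2 * i.1 + 1, by have := i.isLt; omega⟩))
  have hT : ∀ σ, T σ ≠ 0 → T σ = ∏ i, F (i, 0) (i, 1) := fun σ hσ => by
    have h1 := sign_mul_prod_eq F hF (fun a c => hskew _ _) (E.symm.permCongr σ)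
    rw [Equiv.Perm.sign_permCongr] at h1
    simp only [F, Equiv.permCongr_apply, Equiv.symm_symm, Equiv.apply_symm_apply, hE₀, hE₁] at h1 ⊢
    exact h1 (right_ne_zero_of_mul hσ)
  have hne : ∏ i, F (i, 0) (i, 1) ≠ 0 := Finset.prod_ne_zero_iff.mpr fun i _ => by
    simp only [F, hE₀, hE₁, hw₀, hw₁]
    exact (hyz i i).mpr rfl
  have hone : T 1 = ∏ i, F (i, 0) (i, 1) := by simp [T, F, hE₀, hE₁]
  rw [pairAlternating_apply]
  refine mul_ne_zero (one_div_ne_zero (mul_ne_zero (by exact_mod_cast r.factorial_ne_zero)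
    (pow_ne_zero _ two_ne_zero))) ?_
  change ∑ σ, T σ ≠ 0
  classical
  rw [← Finset.sum_filter_ne_zero, Finset.sum_congr rfl fun σ hσ => hT σ (Finset.mem_filter.mp hσ).2,
    Finset.sum_const, nsmul_eq_mul]
  refine mul_ne_zero (Nat.cast_ne_zero.mpr (Finset.card_ne_zero_of_mem (a := 1) ?_)) hne
  simpa [hone] using hne

end Pfaffian

section Degree

variable {σ : Type*}

/-- The restriction of a polynomial to an affine line. -/
noncomputable def restrictLine (a v : σ → ℂ) (E : MvPolynomial σ ℂ) : Polynomial ℂ :=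
  eval₂ Polynomial.C (fun i => Polynomial.C (a i) + Polynomial.C (v i) * Polynomial.X) E

theorem eval_restrictLine (a v : σ → ℂ) (E : MvPolynomial σ ℂ) (t : ℂ) :
    (restrictLine a v E).eval t = eval (fun i => a i + v i * t) E := by
  rw [restrictLine, ← Polynomial.coe_evalRingHom, eval₂_comp_left, eval, coe_eval₂Hom]
  congr 1
  · ext
    simp
  · ext
    simp

theorem natDegree_restrictLine_le (a v : σ → ℂ) (E : MvPolynomial σ ℂ) :
    (restrictLine a v E).natDegree ≤ E.totalDegree := by
  rw [restrictLine, eval₂_eq]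
  refine Polynomial.natDegree_sum_le_of_forall_le _ _ fun d hd => ?_
  refine (Polynomial.natDegree_C_mul_le _ _).trans ((Polynomial.natDegree_prod_le _ _).trans ?_)
  refine (Finset.sum_le_sum fun i _ => ?_).trans (le_totalDegree hd)
  refine Polynomial.natDegree_pow_le.trans ?_
  have : (Polynomial.C (a i) + Polynomial.C (v i) * Polynomial.X).natDegree ≤ 1 :=
    Polynomial.natDegree_add_le_of_degree_le (by simp)
      ((Polynomial.natDegree_C_mul_le _ _).trans Polynomial.natDegree_X_le)
  exact (Nat.mul_le_mul_left _ this).trans_eq (mul_one _)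

/-- A polynomial vanishing at `r` points of a line but not on the whole line has degree at
least `r`. -/
theorem card_le_totalDegree_of_eval_eq_zero {a v : σ → ℂ} {E : MvPolynomial σ ℂ} (ha : eval a E ≠ 0)
    {r : ℕ} (t : Fin r → ℂ) (ht : Function.Injective t)
    (h : ∀ i, eval (fun k => a k + v k * t i) E = 0) : r ≤ E.totalDegree := by
  have h0 : restrictLine a v E ≠ 0 := fun h0 => ha (by
    simpa [h0] using (eval_restrictLine a v E 0).symm)
  have h1 := Polynomial.card_le_degree_of_subset_roots (p := restrictLine a v E)
    (Z := Finset.univ.map ⟨t, ht⟩) (fun s hs => by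
      obtain ⟨i, -, rfl⟩ := Finset.mem_map.mp (Finset.mem_val.mp hs)
      rw [Polynomial.mem_roots h0, Polynomial.IsRoot, Function.Embedding.coeFn_mk,
        eval_restrictLine, h])
  simpa using h1.trans (natDegree_restrictLine_le a v E)

end Degree

section Invariants

variable {L : Type*} [LieRing L] [LieAlgebra ℂ L] {n : ℕ} (b : Basis (Fin n) ℂ L)

/-- The differential of an invariant polynomial at `x` vanishes on the image of `ad y`, for `y`
commuting with `x`. -/
theorem eval_dirDeriv_lie_eq_zero {P : MvPolynomial (Fin n) ℂ} (hP : IsInvariantPoly b P)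
    {x y : L} (hxy : ⁅y, x⁆ = 0) (z : L) :
    eval (fun i => b.repr x i) (dirDeriv b ⁅y, z⁆ P) = 0 := by
  have hbasis : ∀ k, eval (fun i => b.repr x i) (dirDeriv b ⁅y, b k⁆ P) = 0 := fun k => by
    have h := congrArg (fun Q => eval (fun i => b.repr x i) (pderiv k Q))
      ((isInvariantPoly_iff b P).mp hP y)
    simpa [adDeriv_apply, pderiv_linForm, eval_linForm, hxy, dirDeriv,
      Finset.sum_add_distrib, mul_comm] using h
  rw [← b.sum_repr z, lie_sum]
  simp only [lie_smul, eval_dirDeriv] at hbasis ⊢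
  simp only [map_sum, map_smul, Finsupp.coe_finsetSum, Finset.sum_apply, Finsupp.smul_apply,
    smul_eq_mul, Finset.sum_mul]
  rw [Finset.sum_comm]
  simp only [mul_assoc, ← Finset.mul_sum, hbasis, mul_zero, Finset.sum_const_zero]

end Invariants

section Main

variable {L : Type*} [LieRing L] [LieAlgebra ℂ L] [FiniteDimensional ℂ L]
  [LieAlgebra.IsKilling ℂ L] (H : LieSubalgebra ℂ L) [H.IsCartanSubalgebra]
  {n r : ℕ} (b : Basis (Fin n) ℂ L)

/-- `GammaVal` is a nonzero constant multiple of the Jacobian. -/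
theorem exists_gammaVal_eq_mul {κ : Type*} [Fintype κ] [DecidableEq κ]
    (hr : finrank ℂ L = finrank ℂ H + 2 * r)
    (e : Fin n ≃ Fin (2 * r) ⊕ κ) (m : κ → ℕ) (p : κ → MvPolynomial (Fin n) ℂ)
    (hhom : ∀ j, (p j).IsHomogeneous (m j + 1)) (hinv : ∀ j, IsInvariantPoly b (p j))
    (hindep : AlgebraicIndependent ℂ p)
    (hgen : ∀ P : MvPolynomial (Fin n) ℂ, IsInvariantPoly b P →
      P ∈ Algebra.adjoin ℂ (Set.range p)) :
    ∃ c : ℂ, c ≠ 0 ∧ ∀ w : Fin (2 * r) → L, gammaPoly b r w = C c * (jacMatrix b e p w).det := by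
  obtain ⟨x₀, α, y, z, hα, hprop, hy, hyz, hkill, hyy, hzz, hpair⟩ := exists_root_vectors H r hr
  let w : Fin (2 * r) → L := fun k =>
    if k.1 % 2 = 0 then y ⟨k.1 / 2, by have := k.isLt; omega⟩
    else z ⟨k.1 / 2, by have := k.isLt; omega⟩
  have hΓ : GammaVal r w x₀ ≠ 0 := by
    rw [gammaVal_eq]
    refine pairAlternating_ne_zero _ (fun a c => ?_) y z hyy hzz hpair w (fun i => ?_) fun i => ?_
    · rw [bracketForm_apply, bracketForm_apply, ← lie_skew, map_neg, LinearMap.neg_apply]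
    · simp [w]
    · have h1 : (2 * i.1 + 1) % 2 = 1 := by omega
      have h2 : (2 * i.1 + 1) / 2 = i.1 := by omega
      simp [w, h1, h2]
  have hΓ' : gammaPoly b r w ≠ 0 := fun h => hΓ (by rw [← eval_gammaPoly b, h, map_zero])
  obtain ⟨c, hc⟩ := exists_mul_det_jacMatrix_eq b e p hinv hindep hgen hΓ'
  have hcE : c * (jacMatrix b e p w).det ≠ 0 := hc w ▸ hΓ'
  have hE := det_jacMatrix_isHomogeneous b e p m hhom w
  have hx₀ : eval (fun i => b.repr (x₀ : L) i) (jacMatrix b e p w).det ≠ 0 := fun h => hΓ (by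
    rw [← eval_gammaPoly b, ← hc, map_mul, h, mul_zero])
  have hvanish : ∀ (h : H) (i : Fin r), α i h = 0 →
      eval (fun i => b.repr (h : L) i) (jacMatrix b e p w).det = 0 := fun h i hi => by
    rw [eval_det_jacMatrix]
    refine jacAlternating_eq_zero_of_annihilates b e p _ w ⁅y i, z i⁆ (hyz i).2 (fun k => ?_)
      fun j => eval_dirDeriv_lie_eq_zero b (hinv j) ?_ _
    · simp only [w]
      split_ifs
      · exact (hkill _ _ (hyz i).1).1
      · exact (hkill _ _ (hyz i).1).2
    · rw [← lie_skew, hy, hi, zero_smul, neg_zero]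
  obtain ⟨v, hv⟩ := Module.Dual.exists_forall_ne_zero_of_forall_exists
    (fun q : Fin r × Fin r => if q.1 = q.2 then α q.1 else α q.2 x₀ • α q.1 - α q.1 x₀ • α q.2)
    (fun q => by
      by_cases hq : q.1 = q.2
      · exact ⟨x₀, by simpa [hq] using hα q.2⟩
      · by_contra! h0
        refine hprop q.1 q.2 hq ((α q.1 x₀)⁻¹ * α q.2 x₀) (LinearMap.ext fun t => ?_)
        have h1 := h0 t
        simp only [if_neg hq, LinearMap.sub_apply, LinearMap.smul_apply, smul_eq_mul] at h1 ⊢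
        have h2 := hα q.1
        field_simp
        linear_combination -h1)
  have hv₁ : ∀ i, α i v ≠ 0 := fun i => by simpa using hv (i, i)
  have hle : r ≤ ∑ j, m j := by
    refine (card_le_totalDegree_of_eval_eq_zero (v := fun i => b.repr (v : L) i) hx₀
      (fun i => -(α i x₀ / α i v)) (fun i j hij => ?_) fun i => ?_).trans hE.totalDegree_le
    · by_contra hne
      have h1 := hv (i, j)
      simp only [if_neg hne, LinearMap.sub_apply, LinearMap.smul_apply, smul_eq_mul] at h1
      have h2 := hv₁ i
      have h3 := hv₁ j
      simp only [neg_inj] at hij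
      rw [div_eq_div_iff h2 h3] at hij
      exact h1 (by linear_combination -hij)
    · have h1 := hvanish (x₀ + (-(α i x₀ / α i v)) • v) i (by
        have := hv₁ i
        rw [map_add, map_smul, smul_eq_mul]
        field_simp
        ring)
      simpa [mul_comm] using h1
  have hdeg : c.totalDegree = 0 := by
    have h1 := totalDegree_mul_of_isDomain (left_ne_zero_of_mul hcE) (right_ne_zero_of_mul hcE)
    rw [hc, (gammaPoly_isHomogeneous b r w).totalDegree hΓ',
      hE.totalDegree (right_ne_zero_of_mul hcE)] at h1
    omega
  rw [totalDegree_eq_zero_iff_eq_C] at hdeg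
  refine ⟨c.coeff 0, fun h0 => left_ne_zero_of_mul hcE ?_, fun w => ?_⟩
  · rw [hdeg, h0, map_zero]
  · rw [← hdeg, hc]

end Main

end KostantPfaffian

/-- Let `w₁, …, w_{2r} ∈ g` be linearly independent with span `S`, and let
`u₁, …, u_ℓ` be a basis of the Killing-orthogonal complement `S^⊥`.  Then there is a
nonzero constant `κ₁` such that
`∑_{ν ∈ Π_r} B([w_{ν(1)}, w_{ν(2)}], x) ⋯ B([w_{ν(2r-1)}, w_{ν(2r)}], x)
  = κ₁ · det (∂_{u i} p j) (x)`
for all `x ∈ g`, where `p₁, …, p_ℓ` are homogeneous generators of the invariant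
ring `S(g)^G`. -/
theorem stmt19 (L : Type*) [LieRing L] [LieAlgebra ℂ L] [FiniteDimensional ℂ L]
    [LieAlgebra.IsSemisimple ℂ L]
    (H : LieSubalgebra ℂ L) [H.IsCartanSubalgebra]
    (n r : ℕ) (hn : finrank ℂ L = n) (hnr : n = finrank ℂ H + 2 * r)
    (b : Basis (Fin n) ℂ L)
    (m : Fin (finrank ℂ H) → ℕ) (p : Fin (finrank ℂ H) → MvPolynomial (Fin n) ℂ)
    (hhom : ∀ j, (p j).IsHomogeneous (m j + 1))
    (hinv : ∀ j, IsInvariantPoly b (p j))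
    (hindep : AlgebraicIndependent ℂ p)
    (hgen : ∀ P : MvPolynomial (Fin n) ℂ, IsInvariantPoly b P →
      P ∈ Algebra.adjoin ℂ (Set.range p))
    (w : Fin (2 * r) → L) (hw : LinearIndependent ℂ w)
    (u : Fin (finrank ℂ H) → L) (hu : LinearIndependent ℂ u)
    (huw : ∀ i j, killingForm ℂ L (u i) (w j) = 0) :
    ∃ κ₁ : ℂ, κ₁ ≠ 0 ∧ ∀ x : L,
      GammaVal r w x =
        κ₁ * MvPolynomial.eval (fun i => b.repr x i)
          ((Matrix.of fun i j => dirDeriv b (u i) (p j)).det) := by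
  let e : Fin n ≃ Fin (2 * r) ⊕ Fin (finrank ℂ H) :=
    (finCongr (by omega)).trans finSumFinEquiv.symm
  obtain ⟨c, hc, hΓ⟩ :=
    KostantPfaffian.exists_gammaVal_eq_mul H b (hn.trans hnr) e m p hhom hinv hindep hgen
  obtain ⟨d, hd, hdet⟩ := KostantPfaffian.exists_det_jacMatrix_eq b e p w hw u hu huw
  refine ⟨c / d, div_ne_zero hc hd, fun x => ?_⟩
  rw [← KostantPfaffian.eval_gammaPoly b, hΓ, ← hdet, map_mul, map_mul, eval_C, eval_C]
  field_simp
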